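/- Fix z > 0 and let γ : [0, z] → [0, ∞) be a bounded probability density (∫₀^z γ(x) dx = 1) that is continuous at z. Let J be a random variable with density γ, let B be a standard Brownian motion independent of J, let τ_J := inf{t ≥ 0 : B(t) = J − z}, and let R be a BES(3) process independent of (J, B). Define Z̃(t) = z + B(t) for t ∈ [0, τ_J] and Z̃(τ_J + t) = J + R(t) for t ≥ 0. Then for every twice continuously differentiable function φ with compact support contained in (0, ∞), lim_{t → 0+} t^{−1} E[φ(Z̃(t)) − φ(z)] = (1/2) φ''(z) + γ(z) φ'(z). -/

import Mathlib

open MeasureTheory ProbabilityTheory Set Filter Topology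
open scoped Classical

noncomputable section

/-- The σ-algebra generated by a process `Y` up to time `t` (over times in `[0, t]`),
i.e. `σ(Y u : 0 ≤ u ≤ t)`. -/
def natSigma {Ω E : Type*} [MeasurableSpace E] (Y : ℝ → Ω → E) (t : ℝ) :
    MeasurableSpace Ω :=
  ⨆ u : Set.Icc (0 : ℝ) t, MeasurableSpace.comap (Y u) inferInstance

/-- The σ-algebra generated by the whole (nonnegative-time) process `Y`. -/
def procSigma {Ω E : Type*} [MeasurableSpace E] (Y : ℝ → Ω → E) :
    MeasurableSpace Ω :=
  ⨆ u : Set.Ici (0 : ℝ), MeasurableSpace.comap (Y u) inferInstance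

/-- `B` is a standard one-dimensional Brownian motion (with `B 0 = 0`) under `P`:
measurable, a.s. starting at `0` and continuous on `[0, ∞)`, with Gaussian increments
`B t - B s ~ N(0, t - s)` that are independent of the past. -/
structure IsBrownianMotion {Ω : Type*} [MeasurableSpace Ω] (P : Measure Ω)
    (B : ℝ → Ω → ℝ) : Prop where
  measurable : ∀ t : ℝ, Measurable (B t)
  init : ∀ᵐ ω ∂P, B 0 ω = 0
  cont : ∀ᵐ ω ∂P, ContinuousOn (fun t => B t ω) (Set.Ici 0)
  incr_law : ∀ s t : ℝ, 0 ≤ s → s ≤ t →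
    P.map (fun ω => B t ω - B s ω) = gaussianReal 0 (Real.toNNReal (t - s))
  incr_indep : ∀ s t : ℝ, 0 ≤ s → s ≤ t →
    Indep (MeasurableSpace.comap (fun ω => B t ω - B s ω) inferInstance)
      (natSigma B s) P

/-- `W` is a standard `n`-dimensional Brownian motion started at the origin:
its coordinate processes are independent standard one-dimensional Brownian motions. -/
def IsBrownianMotionND {Ω : Type*} [MeasurableSpace Ω] (P : Measure Ω) {n : ℕ}
    (W : ℝ → Ω → EuclideanSpace ℝ (Fin n)) : Prop :=
  (∀ i : Fin n, IsBrownianMotion P (fun t ω => W t ω i)) ∧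
  iIndep (fun i : Fin n => procSigma (fun t ω => W t ω i)) P

/-- The least concave majorant on `[0, ∞)` of a function `f : ℝ → ℝ`:
`t ↦ inf { c t | c concave on [0,∞) and c ≥ f on [0,∞) }`. -/
def concaveMajorant (f : ℝ → ℝ) (t : ℝ) : ℝ :=
  sInf {y | ∃ c : ℝ → ℝ, ConcaveOn ℝ (Set.Ici 0) c ∧ (∀ u, 0 ≤ u → f u ≤ c u) ∧ y = c t}

/-- Right-hand derivative. -/
def rightDeriv (f : ℝ → ℝ) (t : ℝ) : ℝ := derivWithin f (Set.Ioi t) t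

/-- `D(t)`: the first vertex (contact point of the concave majorant) at or after time `t`. -/
def firstVertex (f : ℝ → ℝ) (t : ℝ) : ℝ :=
  sInf {u | t ≤ u ∧ concaveMajorant f u = f u}

/-- The concave majorant process `K` of `B`. -/
def Kproc {Ω : Type*} (B : ℝ → Ω → ℝ) (t : ℝ) (ω : Ω) : ℝ :=
  concaveMajorant (fun u => B u ω) t

/-- The process `X = 2K - B`. -/
def Xproc {Ω : Type*} (B : ℝ → Ω → ℝ) (t : ℝ) (ω : Ω) : ℝ :=
  2 * Kproc B t ω - B t ω

/-- The right-hand slope process `K'` of the concave majorant. -/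
def Kslope {Ω : Type*} (B : ℝ → Ω → ℝ) (t : ℝ) (ω : Ω) : ℝ :=
  rightDeriv (fun u => Kproc B u ω) t

/-- The process `D` of first vertices: `D(t) = inf {u ≥ t : K u = B u}`. -/
def Dproc {Ω : Type*} (B : ℝ → Ω → ℝ) (t : ℝ) (ω : Ω) : ℝ :=
  firstVertex (fun u => B u ω) t

/-- A process `Y` is Markov (w.r.t. its natural filtration): for all `0 ≤ s ≤ t`,
`σ(Y t)` is conditionally independent of `σ(Y u : 0 ≤ u ≤ s)` given `σ(Y s)`. -/
def IsMarkov {Ω E : Type*} [mΩ : MeasurableSpace Ω] [StandardBorelSpace Ω]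
    [MeasurableSpace E] (P : Measure Ω) [IsFiniteMeasure P] (Y : ℝ → Ω → E) : Prop :=
  ∀ s t : ℝ, 0 ≤ s → s ≤ t →
    ∃ hs : MeasurableSpace.comap (Y s) inferInstance ≤ mΩ,
      CondIndep (MeasurableSpace.comap (Y s) inferInstance)
        (MeasurableSpace.comap (Y t) inferInstance)
        (natSigma Y s) hs P

/-- Running maximum on `[0,t]`, as a countable supremum. -/
def runMax (b : ℝ → ℝ) (t : ℝ) : ℝ := ⨆ q : Set.Icc (0 : ℚ) 1, b ((q : ℚ) * t)

lemma runMax_isGreatest {b : ℝ → ℝ} (hc : ContinuousOn b (Ici 0)) {t : ℝ} (ht : 0 ≤ t) :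
    IsGreatest (b '' Icc 0 t) (runMax b t) := by
  have hcomp : IsCompact (b '' Icc 0 t) :=
    isCompact_Icc.image_of_continuousOn (hc.mono Icc_subset_Ici_self)
  obtain ⟨m, hm⟩ := hcomp.exists_isGreatest ⟨b 0, 0, ⟨le_rfl, ht⟩, rfl⟩
  have hmem : ∀ q : Set.Icc (0 : ℚ) 1, b ((q : ℚ) * t) ≤ m := by
    intro q
    apply hm.2
    refine ⟨_, ⟨?_, ?_⟩, rfl⟩
    · have : (0 : ℝ) ≤ ((q : ℚ) : ℝ) := by exact_mod_cast q.2.1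
      positivity
    · have : ((q : ℚ) : ℝ) ≤ 1 := by exact_mod_cast q.2.2
      nlinarith
  have hbdd : BddAbove (range fun q : Set.Icc (0 : ℚ) 1 => b ((q : ℚ) * t)) :=
    ⟨m, by rintro _ ⟨q, rfl⟩; exact hmem q⟩
  suffices runMax b t = m by rw [this]; exact hm
  apply le_antisymm
  · have : Nonempty (Set.Icc (0 : ℚ) 1) := ⟨⟨0, by simp⟩⟩
    exact ciSup_le hmem
  · apply le_of_forall_lt
    intro c hcm
    obtain ⟨s, hs, hsm⟩ := hm.1
    have hg : Continuous fun x : ℝ => b (max 0 (min 1 x) * t) := by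
      refine hc.comp_continuous (by fun_prop) ?_
      intro x
      have : (0:ℝ) ≤ max 0 (min 1 x) := le_max_left _ _
      exact mul_nonneg this ht
    have hopen : IsOpen {x : ℝ | c < b (max 0 (min 1 x) * t)} := isOpen_lt continuous_const hg
    have hne : {x : ℝ | c < b (max 0 (min 1 x) * t)}.Nonempty := by
      refine ⟨s / t, ?_⟩
      rcases ht.eq_or_lt with h | h
      · subst h
        have : s = 0 := le_antisymm hs.2 hs.1
        subst this
        simpa [hsm] using hcm
      · have h1 : s / t ≤ 1 := (div_le_one h).2 hs.2
        have h0 : 0 ≤ s / t := div_nonneg hs.1 ht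
        simp only [mem_ofPred_eq, min_eq_right h1, max_eq_right h0]
        rw [div_mul_cancel₀ _ h.ne', hsm]; exact hcm
    obtain ⟨q, hq⟩ := Rat.denseRange_cast.exists_mem_open hopen hne
    have hq' : c < b ((max 0 (min 1 q) : ℚ) * t) := by
      have := hq
      simp only [mem_ofPred_eq] at this
      push_cast
      exact this
    refine hq'.trans_le (le_ciSup hbdd ⟨max 0 (min 1 q), le_max_left _ _, ?_⟩)
    exact max_le (by norm_num) (min_le_left _ _)

lemma hit_props {b : ℝ → ℝ} (hc : ContinuousOn b (Ici 0)) (hb0 : b 0 = 0) {y : ℝ} (hy : 0 ≤ y)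
    (hhit : ∃ s, 0 ≤ s ∧ y ≤ b s) :
    0 ≤ sInf {s | 0 ≤ s ∧ b s = y} ∧ b (sInf {s | 0 ≤ s ∧ b s = y}) = y ∧
    ∀ s, 0 ≤ s → (sInf {s | 0 ≤ s ∧ b s = y} ≤ s ↔ y ≤ runMax b s) := by
  set S := {s | 0 ≤ s ∧ b s = y} with hS
  have ivt : ∀ s, 0 ≤ s → y ≤ b s → ∃ u ∈ Icc 0 s, b u = y := by
    intro s hs hys
    have := intermediate_value_Icc hs (hc.mono Icc_subset_Ici_self)
    exact this ⟨by rw [hb0]; exact hy, hys⟩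
  have hbdd : BddBelow S := ⟨0, fun s hs => hs.1⟩
  have hne : S.Nonempty := by
    obtain ⟨s, hs, hys⟩ := hhit
    obtain ⟨u, hu, hbu⟩ := ivt s hs hys
    exact ⟨u, hu.1, hbu⟩
  have hclosed : IsClosed S := by
    have := hc.preimage_isClosed_of_isClosed isClosed_Ici (isClosed_singleton (x := y))
    convert this using 1
    ext s; simp [S]
  have hmem := hclosed.csInf_mem hne hbdd
  refine ⟨hmem.1, hmem.2, ?_⟩
  intro s hs
  have hg := runMax_isGreatest hc hs
  constructor
  · intro h
    have := hg.2 ⟨_, ⟨hmem.1, h⟩, rfl⟩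
    rwa [hmem.2] at this
  · intro h
    obtain ⟨u, hu, hbu⟩ := hg.1
    obtain ⟨v, hv, hbv⟩ := ivt u hu.1 (by rw [hbu]; exact h)
    exact (csInf_le hbdd ⟨hv.1, hbv⟩).trans (hv.2.trans hu.2)

/-- Remaining time after hitting. -/
def remTime (b : ℝ → ℝ) (y t : ℝ) : ℝ :=
  ⨆ q : Set.Icc (0 : ℚ) 1, if y ≤ runMax b ((q : ℚ) * t) then (1 - (q : ℚ)) * t else 0

lemma remTime_eq {b : ℝ → ℝ} (hc : ContinuousOn b (Ici 0)) (hb0 : b 0 = 0) {y : ℝ} (hy : 0 ≤ y)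
    (hhit : ∃ s, 0 ≤ s ∧ y ≤ b s) {t : ℝ} (ht : 0 < t) :
    remTime b y t = max 0 (t - sInf {s | 0 ≤ s ∧ b s = y}) := by
  obtain ⟨h0, -, h2⟩ := hit_props hc hb0 hy hhit
  set τ := sInf {s | 0 ≤ s ∧ b s = y}
  have hle : ∀ q : Set.Icc (0 : ℚ) 1,
      (if y ≤ runMax b ((q : ℚ) * t) then (1 - (q : ℚ)) * t else 0) ≤ max 0 (t - τ) := by
    intro q
    have hq0 : (0 : ℝ) ≤ ((q : ℚ) : ℝ) := by exact_mod_cast q.2.1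
    split_ifs with h
    · rw [← h2 _ (by positivity)] at h
      refine le_trans ?_ (le_max_right _ _)
      linarith
    · exact le_max_left _ _
  have : Nonempty (Set.Icc (0 : ℚ) 1) := ⟨⟨0, by simp⟩⟩
  have hbdd : BddAbove (range fun q : Set.Icc (0 : ℚ) 1 =>
      (if y ≤ runMax b ((q : ℚ) * t) then (1 - (q : ℚ)) * t else 0)) :=
    ⟨_, by rintro _ ⟨q, rfl⟩; exact hle q⟩
  apply le_antisymm (ciSup_le hle)
  have hnn : 0 ≤ remTime b y t := by
    refine le_ciSup_of_le hbdd ⟨1, by simp⟩ ?_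
    simp
  apply max_le hnn
  by_cases htau : t ≤ τ
  · linarith
  push Not at htau
  apply le_of_forall_pos_le_add
  intro ε hε
  have : τ / t < min 1 (τ / t + ε / t) := by
    rw [lt_min_iff]
    refine ⟨(div_lt_one ht).2 htau, ?_⟩
    have : 0 < ε / t := by positivity
    linarith
  obtain ⟨q, hq1, hq2⟩ := exists_rat_btwn this
  rw [lt_min_iff] at hq2
  have hq0 : (0:ℝ) ≤ q := le_trans (by positivity) hq1.le
  have hmem : q ∈ Icc (0 : ℚ) 1 := ⟨by exact_mod_cast hq0, by exact_mod_cast hq2.1.le⟩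
  have hτ : τ ≤ q * t := by rw [div_lt_iff₀ ht] at hq1; exact hq1.le
  have h3 := le_ciSup hbdd ⟨q, hmem⟩
  simp only at h3
  rw [if_pos ((h2 _ (by positivity)).1 hτ)] at h3
  have h4 : (q:ℝ) * t < τ + ε := by
    have := hq2.2
    rw [← add_div, lt_div_iff₀ ht] at this
    exact this
  have : (1 - (q:ℝ)) * t ≤ remTime b y t := h3
  linarith

lemma remTime_bounds (b : ℝ → ℝ) (y : ℝ) {t : ℝ} (ht : 0 < t) :
    0 ≤ remTime b y t ∧ remTime b y t ≤ t := by
  have : Nonempty (Set.Icc (0 : ℚ) 1) := ⟨⟨0, by simp⟩⟩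
  have hle : ∀ q : Set.Icc (0 : ℚ) 1,
      (if y ≤ runMax b ((q : ℚ) * t) then (1 - (q : ℚ)) * t else 0) ≤ t := by
    intro q
    have hq0 : (0 : ℝ) ≤ ((q : ℚ) : ℝ) := by exact_mod_cast q.2.1
    split_ifs with h
    · nlinarith
    · exact ht.le
  have hbdd : BddAbove (range fun q : Set.Icc (0 : ℚ) 1 =>
      (if y ≤ runMax b ((q : ℚ) * t) then (1 - (q : ℚ)) * t else 0)) :=
    ⟨_, by rintro _ ⟨q, rfl⟩; exact hle q⟩
  refine ⟨?_, ciSup_le hle⟩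
  refine le_ciSup_of_le hbdd ⟨1, by simp⟩ ?_
  simp

lemma measurable_runMax {Ω : Type*} {m : MeasurableSpace Ω} {β : ℝ → Ω → ℝ}
    (hβ : ∀ s, 0 ≤ s → Measurable (β s)) {t : ℝ} (ht : 0 ≤ t) :
    Measurable fun ω => runMax (fun s => β s ω) t := by
  unfold runMax
  refine Measurable.iSup fun q => hβ _ ?_
  have hq0 : (0 : ℝ) ≤ ((q : ℚ) : ℝ) := by exact_mod_cast q.2.1
  positivity

lemma measurable_remTime {Ω : Type*} {m : MeasurableSpace Ω} {β : ℝ → Ω → ℝ}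
    (hβ : ∀ s, 0 ≤ s → Measurable (β s)) {Y : Ω → ℝ} (hY : Measurable Y) {t : ℝ} (ht : 0 ≤ t) :
    Measurable fun ω => remTime (fun s => β s ω) (Y ω) t := by
  unfold remTime
  refine Measurable.iSup fun q => ?_
  have hq0 : (0 : ℝ) ≤ ((q : ℚ) : ℝ) := by exact_mod_cast q.2.1
  refine Measurable.ite ?_ measurable_const measurable_const
  exact measurableSet_le hY (measurable_runMax hβ (by positivity))

/-- Discretised reflection sum. -/
def gridSum (f : ℝ → ℝ) (b : ℝ → ℝ) (y t : ℝ) (N : ℕ) : ℝ :=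
  ∑ k ∈ Finset.range (N + 2),
    if (y < b (k * t / (N + 1)) ∧ ∀ j < k, b (j * t / (N + 1)) ≤ y) then
      f (b t - b (k * t / (N + 1))) else 0

lemma gridSum_single {f b : ℝ → ℝ} {y t : ℝ} {N k : ℕ} (hk : k < N + 2)
    (h : y < b (k * t / (N + 1)) ∧ ∀ j < k, b (j * t / (N + 1)) ≤ y) :
    gridSum f b y t N = f (b t - b (k * t / (N + 1))) := by
  unfold gridSum
  rw [Finset.sum_eq_single k]
  · rw [if_pos h]
  · intro j _ hjk
    rw [if_neg]
    rintro ⟨h1, h2⟩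
    rcases lt_or_gt_of_ne hjk with h3 | h3
    · exact absurd (h.2 j h3) (not_le.2 h1)
    · exact absurd (h2 k h3) (not_le.2 h.1)
  · intro h'; simp at h'; omega

lemma gridSum_bound {f b : ℝ → ℝ} {y t C : ℝ} (hC : ∀ x, |f x| ≤ C) (N : ℕ) :
    |gridSum f b y t N| ≤ C := by
  have hC0 : 0 ≤ C := (abs_nonneg _).trans (hC 0)
  by_cases h : ∃ k < N + 2, (y < b (k * t / (N + 1)) ∧ ∀ j < k, b (j * t / (N + 1)) ≤ y)
  · obtain ⟨k, hk, h⟩ := h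
    rw [gridSum_single hk h]; exact hC _
  · push Not at h
    unfold gridSum
    rw [Finset.sum_eq_zero]
    · simpa using hC0
    · intro k hk
      rw [if_neg]
      rintro ⟨h1, h2⟩
      obtain ⟨j, hj, h3⟩ := h k (by simpa using hk) h1
      exact absurd (h2 j hj) (not_le.2 h3)

lemma gridSum_tendsto {f b : ℝ → ℝ} (hf : Continuous f) (hc : ContinuousOn b (Ici 0))
    (hb0 : b 0 = 0) {y t : ℝ} (hy : 0 ≤ y) (ht : 0 < t) :
    Tendsto (gridSum f b y t) atTop (𝓝 (if y < runMax b t then f (b t - y) else 0)) := by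
  have hg := runMax_isGreatest hc ht.le
  have hmem : ∀ N k : ℕ, k < N + 2 → (k : ℝ) * t / (N + 1) ∈ Icc 0 t := by
    intro N k hk
    have : (k : ℝ) ≤ N + 1 := by exact_mod_cast (by omega : k ≤ N + 1)
    refine ⟨by positivity, ?_⟩
    rw [div_le_iff₀ (by positivity)]
    nlinarith
  split_ifs with h
  · obtain ⟨s, hs, hbs⟩ := hg.1
    rw [← hbs] at h
    rw [Metric.tendsto_atTop]
    intro ε hε
    obtain ⟨δ₁, hδ₁, hfδ⟩ := Metric.continuous_iff.1 hf (b t - y) ε hε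
    have huc := isCompact_Icc.uniformContinuousOn_of_continuous
      (hc.mono (Icc_subset_Ici_self : Icc 0 t ⊆ Ici 0))
    rw [Metric.uniformContinuousOn_iff] at huc
    obtain ⟨δ, hδ, hu⟩ := huc (min δ₁ (b s - y)) (lt_min hδ₁ (by linarith))
    obtain ⟨N₀, hN₀⟩ := exists_nat_gt (t / δ)
    refine ⟨N₀, fun N hN => ?_⟩
    have hNpos : (0 : ℝ) < N + 1 := by positivity
    have hmesh : t / (N + 1) < δ := by
      rw [div_lt_iff₀ hNpos]
      rw [div_lt_iff₀ hδ] at hN₀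
      have : (N₀ : ℝ) ≤ N := by exact_mod_cast hN
      nlinarith
    have hex : ∃ k : ℕ, k < N + 2 ∧ y < b (k * t / (N + 1)) := by
      refine ⟨⌊s * (N + 1) / t⌋₊, ?_, ?_⟩
      · have h1 : s * (N + 1) / t ≤ ((N + 1 : ℕ) : ℝ) := by
          rw [div_le_iff₀ ht]; push_cast; nlinarith [hs.2]
        have := Nat.floor_le_floor h1
        rw [Nat.floor_natCast] at this
        omega
      · set k := ⌊s * (N + 1) / t⌋₊
        have hk1 : (k : ℝ) ≤ s * (N + 1) / t :=
          Nat.floor_le (by have := hs.1; positivity)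
        have hk2 : s * (N + 1) / t < k + 1 := Nat.lt_floor_add_one _
        rw [le_div_iff₀ ht] at hk1
        rw [div_lt_iff₀ ht] at hk2
        have e1 : (k : ℝ) * t / (N + 1) ≤ s := by rw [div_le_iff₀ hNpos]; exact hk1
        have e2 : s < (k : ℝ) * t / (N + 1) + t / (N + 1) := by
          rw [← add_div, lt_div_iff₀ hNpos]; linarith
        have := hu s hs (k * t / (N + 1)) ⟨by positivity, e1.trans hs.2⟩ (by
          rw [Real.dist_eq, abs_lt]; constructor <;> linarith)
        rw [Real.dist_eq, lt_min_iff, abs_lt, abs_lt] at this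
        linarith [this.2.2]
    have hspec := Nat.find_spec hex
    have hmin : ∀ j < Nat.find hex, b (j * t / (N + 1)) ≤ y := by
      intro j hj
      have := Nat.find_min hex hj
      push Not at this
      exact this (hj.trans hspec.1)
    set k := Nat.find hex
    rw [gridSum_single hspec.1 ⟨hspec.2, hmin⟩]
    apply hfδ
    have hk0 : k ≠ 0 := by
      intro h0
      have := hspec.2
      rw [h0] at this
      simp [hb0] at this
      linarith
    obtain ⟨j, hj⟩ := Nat.exists_eq_succ_of_ne_zero hk0
    have hj1 := hmin j (by omega)
    have := hu _ (hmem N k hspec.1) _ (hmem N j (by omega)) (by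
      rw [Real.dist_eq, ← sub_div, ← sub_mul, hj]
      push_cast
      rw [add_sub_cancel_left, one_mul, abs_of_pos (by positivity)]
      exact hmesh)
    rw [Real.dist_eq, lt_min_iff, abs_lt] at this
    rw [Real.dist_eq, abs_lt]
    have := hspec.2
    constructor <;> linarith
  · have : gridSum f b y t = fun _ => 0 := by
      funext N
      unfold gridSum
      apply Finset.sum_eq_zero
      intro k hk
      rw [if_neg]
      rintro ⟨h1, -⟩
      apply h
      exact h1.trans_le (hg.2 ⟨_, hmem N k (by simpa using hk), rfl⟩)
    rw [this]
    exact tendsto_const_nhds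

lemma IsBrownianMotion.neg {Ω : Type*} [MeasurableSpace Ω] {P : Measure Ω} {B : ℝ → Ω → ℝ}
    (h : IsBrownianMotion P B) : IsBrownianMotion P (fun t ω => - B t ω) where
  measurable t := (h.measurable t).neg
  init := by filter_upwards [h.init] with ω hω; simp [hω]
  cont := by filter_upwards [h.cont] with ω hω; exact hω.neg
  incr_law s t hs hst := by
    have : (fun ω => - B t ω - - B s ω) = (fun x : ℝ => -x) ∘ (fun ω => B t ω - B s ω) := by
      funext ω; simp; ring
    have hm : Measurable (fun ω => B t ω - B s ω) := (h.measurable t).sub (h.measurable s)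
    rw [this, ← Measure.map_map (by fun_prop) hm, h.incr_law s t hs hst, gaussianReal_map_neg]
    simp
  incr_indep s t hs hst := by
    refine indep_of_indep_of_le_left (indep_of_indep_of_le_right (h.incr_indep s t hs hst) ?_) ?_
    · refine iSup_le fun u => le_trans ?_ (le_iSup _ u)
      rw [← measurable_iff_comap_le]
      exact (comap_measurable (B u)).neg
    · rw [← measurable_iff_comap_le]
      have : (fun ω => - B t ω - - B s ω) = fun ω => - (B t ω - B s ω) := by
        funext ω; ring
      rw [this]
      exact (comap_measurable (fun ω => B t ω - B s ω)).neg

lemma IsBrownianMotion.law {Ω : Type*} [MeasurableSpace Ω] {P : Measure Ω} {B : ℝ → Ω → ℝ}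
    (h : IsBrownianMotion P B) {t : ℝ} (ht : 0 ≤ t) :
    P.map (B t) = gaussianReal 0 (Real.toNNReal t) := by
  have := h.incr_law 0 t le_rfl ht
  rw [sub_zero] at this
  rw [← this]
  apply Measure.map_congr
  filter_upwards [h.init] with ω hω
  simp [hω]

lemma measurable_natSigma {Ω E : Type*} [MeasurableSpace E] (Y : ℝ → Ω → E) {t u : ℝ}
    (hu : 0 ≤ u) (hut : u ≤ t) : Measurable[natSigma Y t] (Y u) := by
  rw [measurable_iff_comap_le]
  exact le_iSup (fun u : Set.Icc (0 : ℝ) t => MeasurableSpace.comap (Y u) inferInstance)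
    ⟨u, hu, hut⟩

lemma measurable_procSigma {Ω E : Type*} [MeasurableSpace E] (Y : ℝ → Ω → E) {u : ℝ}
    (hu : 0 ≤ u) : Measurable[procSigma Y] (Y u) := by
  rw [measurable_iff_comap_le]
  exact le_iSup (fun u : Set.Ici (0 : ℝ) => MeasurableSpace.comap (Y u) inferInstance) ⟨u, hu⟩

section
variable {Ω : Type*} [MeasurableSpace Ω] {P : Measure Ω} [IsProbabilityMeasure P] {B : ℝ → Ω → ℝ}

lemma grid_term (h : IsBrownianMotion P B) {y t : ℝ} (ht : 0 < t) {N k : ℕ} (hk : k < N + 2)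
    {f : ℝ → ℝ} (hf : Continuous f) :
    ∫ ω, (if (y < B (k * t / (N + 1)) ω ∧ ∀ j < k, B (j * t / (N + 1)) ω ≤ y) then
      f (B t ω - B (k * t / (N + 1)) ω) else 0) ∂P =
    (∫ ω, (if (y < B (k * t / (N + 1)) ω ∧ ∀ j < k, B (j * t / (N + 1)) ω ≤ y) then 1 else 0) ∂P) *
      ∫ x, f x ∂(gaussianReal 0 (Real.toNNReal (t - k * t / (N + 1)))) := by
  set s : ℝ := k * t / (N + 1)
  have hN : (0:ℝ) < N + 1 := by positivity
  have hs0 : 0 ≤ s := by positivity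
  have hst : s ≤ t := by
    have : (k : ℝ) ≤ N + 1 := by exact_mod_cast (by omega : k ≤ N + 1)
    rw [div_le_iff₀ (by positivity)]
    nlinarith
  set F : Set Ω := {ω | y < B s ω ∧ ∀ j < k, B (j * t / (N + 1)) ω ≤ y} with hF
  have hFm : MeasurableSet[natSigma B s] F := by
    have e : F = {ω | y < B s ω} ∩ ⋂ j ∈ Finset.range k, {ω | B (j * t / (N + 1)) ω ≤ y} := by
      ext ω; simp [F]
    rw [e]
    refine MeasurableSet.inter ?_ ?_
    · exact (measurable_natSigma B hs0 le_rfl) measurableSet_Ioi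
    · refine Finset.measurableSet_biInter _ fun j hj => ?_
      have hjk : (j:ℝ) ≤ k := by exact_mod_cast (Finset.mem_range.1 hj).le
      refine (measurable_natSigma B (u := j * t / (N + 1)) (t := s) (by positivity) ?_)
        measurableSet_Iic
      exact div_le_div_of_nonneg_right (mul_le_mul_of_nonneg_right hjk ht.le) hN.le
  have hle : natSigma B s ≤ ‹MeasurableSpace Ω› := by
    refine iSup_le fun u => ?_
    rw [← measurable_iff_comap_le]; exact h.measurable u
  have hX : Measurable fun ω => B t ω - B s ω := (h.measurable t).sub (h.measurable s)
  have hI : Measurable[natSigma B s] (F.indicator (fun _ => (1:ℝ))) :=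
    measurable_const.indicator hFm
  have hind : IndepFun (F.indicator (fun _ => (1:ℝ))) (fun ω => B t ω - B s ω) P := by
    rw [IndepFun_iff_Indep]
    refine indep_of_indep_of_le_left (h.incr_indep s t hs0 hst).symm ?_
    rw [← measurable_iff_comap_le]; exact hI
  have key := hind.integral_fun_comp_mul_comp (f := id) (g := f) (hI.mono hle le_rfl).aemeasurable
    hX.aemeasurable measurable_id.aestronglyMeasurable hf.aestronglyMeasurable
  have e1 : ∀ ω, (if ω ∈ F then f (B t ω - B s ω) else 0) =
      id (F.indicator (fun _ => (1:ℝ)) ω) * f (B t ω - B s ω) := by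
    intro ω; by_cases hω : ω ∈ F <;> simp [hω]
  have e2 : ∀ ω, (if ω ∈ F then (1:ℝ) else 0) = id (F.indicator (fun _ => (1:ℝ)) ω) := by
    intro ω; by_cases hω : ω ∈ F <;> simp [hω]
  have e3 : ∫ x, f x ∂(gaussianReal 0 (Real.toNNReal (t - s))) = ∫ ω, f (B t ω - B s ω) ∂P := by
    rw [← h.incr_law s t hs0 hst, integral_map hX.aemeasurable hf.aestronglyMeasurable]
  rw [e3]
  have k1 : ∫ ω, (if ω ∈ F then f (B t ω - B s ω) else 0) ∂P =
    (∫ ω, (if ω ∈ F then (1:ℝ) else 0) ∂P) * ∫ ω, f (B t ω - B s ω) ∂P := by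
    simp_rw [e1, e2]; exact key
  exact k1

lemma measurable_grid_term (h : IsBrownianMotion P B) {y t : ℝ} {N k : ℕ}
    {f : ℝ → ℝ} (hf : Continuous f) :
    Measurable fun ω => (if (y < B (k * t / (N + 1)) ω ∧ ∀ j < k, B (j * t / (N + 1)) ω ≤ y) then
      f (B t ω - B (k * t / (N + 1)) ω) else 0) := by
  refine Measurable.ite ?_ (hf.measurable.comp ((h.measurable _).sub (h.measurable _)))
    measurable_const
  have e' : {ω | y < B (k * t / (N + 1)) ω ∧ ∀ j < k, B (j * t / (N + 1)) ω ≤ y} =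
      {ω | y < B (k * t / (N + 1)) ω} ∩ {ω | ∀ j < k, B (j * t / (N + 1)) ω ≤ y} := by
    ext ω; simp
  rw [e']
  refine MeasurableSet.inter (measurableSet_lt measurable_const (h.measurable _)) ?_
  have e : {ω | ∀ j < k, B (j * t / (N + 1)) ω ≤ y} =
      ⋂ j ∈ Finset.range k, {ω | B (j * t / (N + 1)) ω ≤ y} := by
      ext ω; simp
  rw [e]
  exact Finset.measurableSet_biInter _ fun j hj => measurableSet_le (h.measurable _) measurable_const

lemma gridSum_integral (h : IsBrownianMotion P B) {y t : ℝ} (ht : 0 < t) (N : ℕ)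
    {f : ℝ → ℝ} (hf : Continuous f) {C : ℝ} (hC : ∀ x, |f x| ≤ C) :
    ∫ ω, gridSum f (fun s => B s ω) y t N ∂P =
      ∫ ω, gridSum (fun x => f (-x)) (fun s => B s ω) y t N ∂P := by
  have hC0 : 0 ≤ C := (abs_nonneg _).trans (hC 0)
  have hIntg : ∀ g : ℝ → ℝ, Continuous g → (∀ x, |g x| ≤ C) → ∀ k ∈ Finset.range (N + 2),
      Integrable (fun ω => (if (y < B (k * t / (N + 1)) ω ∧ ∀ j < k, B (j * t / (N + 1)) ω ≤ y)
        then g (B t ω - B (k * t / (N + 1)) ω) else 0)) P := by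
    intro g hg hgC k _
    refine Integrable.of_bound (measurable_grid_term h hg).aestronglyMeasurable C ?_
    refine Eventually.of_forall fun ω => ?_
    rw [Real.norm_eq_abs]
    split_ifs
    · exact hgC _
    · simpa using hC0
  unfold gridSum
  rw [integral_finsetSum _ (hIntg f hf hC),
    integral_finsetSum _ (hIntg (fun x => f (-x)) (by fun_prop) (fun x => hC _))]
  refine Finset.sum_congr rfl fun k hk => ?_
  rw [grid_term h ht (by simpa using hk) hf,
    grid_term h ht (by simpa using hk) (f := fun x => f (-x)) (by fun_prop)]
  congr 1
  conv_lhs => rw [← neg_zero, ← gaussianReal_map_neg]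
  rw [integral_map (by fun_prop) hf.aestronglyMeasurable]

/-- Reflection: the law of `B t - y` on `{y < max}` is symmetric. -/
lemma reflection (h : IsBrownianMotion P B) {y t : ℝ} (hy : 0 ≤ y) (ht : 0 < t) :
    (P.restrict {ω | y < runMax (fun s => B s ω) t}).map (fun ω => B t ω - y) =
    (P.restrict {ω | y < runMax (fun s => B s ω) t}).map (fun ω => y - B t ω) := by
  have hm1 : Measurable fun ω => B t ω - y := (h.measurable t).sub_const y
  have hm2 : Measurable fun ω => y - B t ω := (h.measurable t).const_sub y
  have hAm : MeasurableSet {ω | y < runMax (fun s => B s ω) t} :=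
    measurableSet_lt measurable_const (measurable_runMax (fun s _ => h.measurable s) ht.le)
  apply ext_of_forall_integral_eq_of_IsFiniteMeasure
  intro f
  rw [integral_map hm1.aemeasurable f.continuous.aestronglyMeasurable,
    integral_map hm2.aemeasurable f.continuous.aestronglyMeasurable,
    ← integral_indicator hAm, ← integral_indicator hAm]
  have hC : ∀ x, |f x| ≤ ‖f‖ := fun x => f.norm_coe_le_norm x
  have lim : ∀ g : ℝ → ℝ, Continuous g → (∀ x, |g x| ≤ ‖f‖) →
      Tendsto (fun N => ∫ ω, gridSum g (fun s => B s ω) y t N ∂P) atTop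
        (𝓝 (∫ ω, {ω | y < runMax (fun s => B s ω) t}.indicator (fun ω => g (B t ω - y)) ω ∂P)) := by
    intro g hg hgC
    refine tendsto_integral_of_dominated_convergence (fun _ => ‖f‖) ?_ (integrable_const _) ?_ ?_
    · intro N
      unfold gridSum
      exact (Finset.measurable_sum _ fun k _ => measurable_grid_term h hg).aestronglyMeasurable
    · intro N
      exact Eventually.of_forall fun ω => gridSum_bound hgC N
    · filter_upwards [h.init, h.cont] with ω h0 hcont
      have := gridSum_tendsto hg hcont h0 hy ht
      exact this
  have l1 := lim f f.continuous hC
  have l2 := lim (fun x => f (-x)) (by fun_prop) (fun x => hC _)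
  simp_rw [gridSum_integral h ht _ f.continuous hC] at l1
  have := tendsto_nhds_unique l1 l2
  simpa using this

end

lemma gaussian_scale {t : ℝ} (ht : 0 ≤ t) :
    gaussianReal 0 (Real.toNNReal t) = (gaussianReal 0 1).map (fun x => √t * x) := by
  have := gaussianReal_map_const_mul (μ := 0) (v := 1) (√t)
  rw [this]
  congr 1
  · simp
  · ext
    simp [Real.sq_sqrt ht, ht]

lemma gaussian_integrable_pow (v : NNReal) (k : ℕ) :
    Integrable (fun x : ℝ => |x| ^ k) (gaussianReal 0 v) := by
  have := (memLp_id_gaussianReal (μ := 0) (v := v) k).integrable_norm_pow'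
  simpa using this

lemma gaussian_abs_one : ∫ x, |x| ∂(gaussianReal 0 1) = √(2 / Real.pi) := by
  rw [integral_gaussianReal_eq_integral_smul one_ne_zero]
  have e : ∀ x : ℝ, gaussianPDFReal 0 1 x • |x| =
      (fun u : ℝ => (√(2 * Real.pi))⁻¹ * (u ^ (1:ℝ) * Real.exp (-(1/2) * u ^ (2:ℝ)))) |x| := by
    intro x
    simp only [gaussianPDFReal, smul_eq_mul, Real.rpow_one, Real.rpow_two, sq_abs, NNReal.coe_one,
      mul_one, sub_zero]
    have : -x ^ 2 / 2 = -(1/2) * x ^ 2 := by ring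
    rw [this]; ring
  simp_rw [e]
  rw [integral_comp_abs (f := fun u : ℝ => (√(2 * Real.pi))⁻¹ * (u ^ (1:ℝ) * Real.exp (-(1/2) * u ^ (2:ℝ)))),
    integral_const_mul,
    integral_rpow_mul_exp_neg_mul_rpow (by norm_num) (by norm_num) (by norm_num)]
  norm_num
  have h2 : √2 * √2 = 2 := Real.mul_self_sqrt (by norm_num)
  have hp : 0 < √Real.pi := Real.sqrt_pos.2 Real.pi_pos
  field_simp
  nlinarith

lemma gaussian_abs {t : ℝ} (ht : 0 ≤ t) :
    ∫ x, |x| ∂(gaussianReal 0 (Real.toNNReal t)) = √(2 / Real.pi) * √t := by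
  rw [gaussian_scale ht, integral_map (by fun_prop) (by fun_prop)]
  simp_rw [abs_mul, abs_of_nonneg (Real.sqrt_nonneg t)]
  rw [integral_const_mul, gaussian_abs_one, mul_comm]

lemma gaussian_sq {t : ℝ} (ht : 0 ≤ t) :
    ∫ x, x ^ 2 ∂(gaussianReal 0 (Real.toNNReal t)) = t := by
  have h := variance_id_gaussianReal (μ := 0) (v := Real.toNNReal t)
  rw [variance_of_integral_eq_zero (by fun_prop) (by simp)] at h
  simpa [ht] using h

lemma gaussian_cube {t : ℝ} (ht : 0 ≤ t) :
    ∫ x, |x| ^ 3 ∂(gaussianReal 0 (Real.toNNReal t)) =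
      (∫ x, |x| ^ 3 ∂(gaussianReal 0 1)) * (t * √t) := by
  rw [gaussian_scale ht, integral_map (by fun_prop) (by fun_prop)]
  simp_rw [abs_mul, abs_of_nonneg (Real.sqrt_nonneg t), mul_pow]
  rw [integral_const_mul, mul_comm]
  congr 1
  rw [pow_succ, Real.sq_sqrt ht]

lemma gaussian_small (z : ℝ) : Tendsto (fun n : ℕ => gaussianReal 0 (Real.toNNReal (n + 1)) (Icc (-z) z))
    atTop (𝓝 0) := by
  have hb : ∀ n : ℕ, gaussianReal 0 (Real.toNNReal (n + 1)) (Icc (-z) z) ≤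
      ENNReal.ofReal ((√(n + 1))⁻¹) * volume (Icc (-z) z) := by
    intro n
    have hv : Real.toNNReal ((n:ℝ) + 1) ≠ 0 := by
      have : (0:ℝ) < n + 1 := by positivity
      simpa using this
    rw [gaussianReal_apply _ hv, ← setLIntegral_const]
    apply lintegral_mono
    intro x
    apply ENNReal.ofReal_le_ofReal
    unfold gaussianPDFReal
    have hn : (0:ℝ) < n + 1 := by positivity
    rw [Real.coe_toNNReal _ hn.le]
    have h1 : Real.exp (-(x - 0) ^ 2 / (2 * ((n:ℝ) + 1))) ≤ 1 := by
      apply Real.exp_le_one_iff.2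
      apply div_nonpos_of_nonpos_of_nonneg
      · nlinarith [sq_nonneg (x - 0)]
      · positivity
    have h2 : (√(2 * Real.pi * (n + 1)))⁻¹ ≤ (√((n:ℝ) + 1))⁻¹ := by
      apply inv_anti₀ (Real.sqrt_pos.2 hn)
      apply Real.sqrt_le_sqrt
      nlinarith [Real.pi_gt_three]
    have h3 : 0 ≤ (√(2 * Real.pi * (n + 1)))⁻¹ := by positivity
    nlinarith [Real.exp_pos (-(x - 0) ^ 2 / (2 * ((n:ℝ) + 1)))]
  have ht : Tendsto (fun n : ℕ => ENNReal.ofReal ((√((n:ℝ) + 1))⁻¹) * volume (Icc (-z) z))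
      atTop (𝓝 0) := by
    have h1 : Tendsto (fun n : ℕ => (√((n:ℝ) + 1))⁻¹) atTop (𝓝 0) := by
      apply tendsto_inv_atTop_zero.comp
      apply Real.tendsto_sqrt_atTop.comp
      exact tendsto_atTop_add_const_right _ _ tendsto_natCast_atTop_atTop
    have h2 := (ENNReal.continuous_ofReal.tendsto 0).comp h1
    have h3 := ENNReal.Tendsto.mul_const (b := volume (Icc (-z) z)) h2
      (Or.inr (by simp))
    simpa using h3
  exact tendsto_of_tendsto_of_tendsto_of_le_of_le tendsto_const_nhds ht (fun _ => zero_le) hb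

section
variable {Ω : Type*} [MeasurableSpace Ω] {P : Measure Ω} [IsProbabilityMeasure P] {B : ℝ → Ω → ℝ}

lemma refl_mean (h : IsBrownianMotion P B) {y t : ℝ} (hy : 0 ≤ y) (ht : 0 < t) :
    ∫ ω in {ω | y < runMax (fun s => B s ω) t}, (B t ω - y) ∂P = 0 := by
  have hm1 : Measurable fun ω => B t ω - y := (h.measurable t).sub_const y
  have hm2 : Measurable fun ω => y - B t ω := (h.measurable t).const_sub y
  have h1 := integral_map (μ := P.restrict {ω | y < runMax (fun s => B s ω) t})
    hm1.aemeasurable (f := fun x => x) (by fun_prop)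
  have h2 := integral_map (μ := P.restrict {ω | y < runMax (fun s => B s ω) t})
    hm2.aemeasurable (f := fun x => x) (by fun_prop)
  rw [reflection h hy ht, h2] at h1
  have h3 : ∀ ω, y - B t ω = -(B t ω - y) := fun ω => by ring
  simp_rw [h3, integral_neg] at h1
  linarith

lemma runMax_facts (h : IsBrownianMotion P B) {t : ℝ} (ht : 0 ≤ t) :
    ∀ᵐ ω ∂P, 0 ≤ runMax (fun s => B s ω) t ∧ B t ω ≤ runMax (fun s => B s ω) t := by
  filter_upwards [h.init, h.cont] with ω h0 hc
  have hg := runMax_isGreatest hc ht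
  exact ⟨by rw [← h0]; exact hg.2 ⟨0, ⟨le_rfl, ht⟩, rfl⟩, hg.2 ⟨t, ⟨ht, le_rfl⟩, rfl⟩⟩

lemma runMax_tail (h : IsBrownianMotion P B) {y t : ℝ} (hy : 0 ≤ y) (ht : 0 < t) :
    P {ω | y < runMax (fun s => B s ω) t} = P {ω | y < |B t ω|} := by
  set A := {ω | y < runMax (fun s => B s ω) t} with hA
  have hv : Real.toNNReal t ≠ 0 := by simpa using ht
  have hlaw := h.law ht.le
  have hBt := h.measurable t
  have : NullSingletonClass (gaussianReal 0 (Real.toNNReal t)) := nullSingletonClass_gaussianReal hv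
  have hnull : P {ω | B t ω = y} = 0 := by
    have : P {ω | B t ω = y} = P.map (B t) {y} := by
      rw [Measure.map_apply hBt (measurableSet_singleton y)]; rfl
    rw [this, hlaw]; exact measure_singleton y
  have hsym : P {ω | B t ω < -y} = P {ω | y < B t ω} := by
    have e1 : P {ω | B t ω < -y} = P.map (B t) (Iio (-y)) := by
      rw [Measure.map_apply hBt measurableSet_Iio]; rfl
    have e2 : P {ω | y < B t ω} = P.map (B t) (Ioi y) := by
      rw [Measure.map_apply hBt measurableSet_Ioi]; rfl
    rw [e1, e2, hlaw]
    conv_rhs => rw [← neg_zero, ← gaussianReal_map_neg,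
      Measure.map_apply (by fun_prop) measurableSet_Ioi]
    congr 1
    ext x; simp [lt_neg]
  have hm1 : Measurable fun ω => B t ω - y := (h.measurable t).sub_const y
  have hm2 : Measurable fun ω => y - B t ω := (h.measurable t).const_sub y
  have hAm : MeasurableSet A :=
    measurableSet_lt measurable_const (measurable_runMax (fun s _ => h.measurable s) ht.le)
  have hge : P (A ∩ {ω | y < B t ω}) = P {ω | y < B t ω} := by
    apply measure_congr
    filter_upwards [runMax_facts h ht.le] with ω hω
    apply propext
    constructor
    · exact fun h => h.2
    · intro h'; exact ⟨lt_of_lt_of_le h' hω.2, h'⟩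
  have hle : P (A ∩ {ω | B t ω < y}) = P {ω | y < B t ω} := by
    rw [← hge]
    have := congrArg (fun μ : Measure ℝ => μ (Ioi 0)) (reflection h hy ht)
    rw [Measure.map_apply hm1 measurableSet_Ioi, Measure.map_apply hm2 measurableSet_Ioi,
      Measure.restrict_apply (hm1 measurableSet_Ioi),
      Measure.restrict_apply (hm2 measurableSet_Ioi)] at this
    have s1 : (fun ω => B t ω - y) ⁻¹' Ioi 0 ∩ A = A ∩ {ω | y < B t ω} := by
      ext ω; simp [and_comm]
    have s2 : (fun ω => y - B t ω) ⁻¹' Ioi 0 ∩ A = A ∩ {ω | B t ω < y} := by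
      ext ω; simp [and_comm]
    rw [← s1, ← s2, this]
  have hsplit : P A = P (A ∩ {ω | y < B t ω}) + P (A ∩ {ω | B t ω < y}) := by
    rw [← measure_union]
    · apply measure_congr
      have : ∀ᵐ ω ∂P, B t ω ≠ y := by
        rw [ae_iff]; simpa using hnull
      filter_upwards [this] with ω hω
      apply propext
      constructor
      · intro hA
        rcases lt_or_gt_of_ne hω with h1 | h1
        · exact Or.inr ⟨hA, h1⟩
        · exact Or.inl ⟨hA, h1⟩
      · rintro (h1 | h1) <;> exact h1.1
    · rw [Set.disjoint_left]
      rintro ω ⟨_, h1⟩ ⟨_, h2⟩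
      simp at h1 h2; linarith
    · exact hAm.inter (measurableSet_lt hBt measurable_const)
  rw [hsplit, hge, hle]
  have hsp : {ω | y < |B t ω|} = {ω | y < B t ω} ∪ {ω | B t ω < -y} := by
    ext ω; simp [lt_abs, lt_neg]
  rw [hsp, measure_union, hsym]
  · rw [Set.disjoint_left]
    intro ω h1 h2
    simp at h1 h2; linarith
  · exact measurableSet_lt hBt measurable_const

lemma runMax_law (h : IsBrownianMotion P B) {t : ℝ} (ht : 0 < t) :
    P.map (fun ω => runMax (fun s => B s ω) t) = P.map (fun ω => |B t ω|) := by
  have hM : Measurable fun ω => runMax (fun s => B s ω) t :=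
    measurable_runMax (fun s _ => h.measurable s) ht.le
  have hB : Measurable fun ω => |B t ω| := (h.measurable t).abs
  have := Measure.isProbabilityMeasure_map (μ := P) hM.aemeasurable
  have := Measure.isProbabilityMeasure_map (μ := P) hB.aemeasurable
  apply Measure.ext_of_Iic
  intro y
  rw [← compl_Ioi, prob_compl_eq_one_sub measurableSet_Ioi, prob_compl_eq_one_sub measurableSet_Ioi]
  congr 1
  rw [Measure.map_apply hM measurableSet_Ioi, Measure.map_apply hB measurableSet_Ioi]
  rcases le_or_gt 0 y with hy | hy
  · exact runMax_tail h hy ht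
  · apply measure_congr
    filter_upwards [runMax_facts h ht.le] with ω hω
    apply propext
    constructor
    · intro _; exact lt_of_lt_of_le hy (abs_nonneg _)
    · intro _; exact lt_of_lt_of_le hy hω.1

lemma ae_hit (h : IsBrownianMotion P B) (z : ℝ) : ∀ᵐ ω ∂P, ∃ s, 0 ≤ s ∧ z ≤ B s ω := by
  have key : P {ω | ∀ n : ℕ, runMax (fun s => B s ω) (n + 1) < z} = 0 := by
    apply le_antisymm _ zero_le
    refine ge_of_tendsto' (gaussian_small z) fun n => ?_
    have hn : (0:ℝ) < n + 1 := by positivity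
    have hM : Measurable fun ω => runMax (fun s => B s ω) (n + 1) :=
      measurable_runMax (fun s _ => h.measurable s) hn.le
    calc P {ω | ∀ n : ℕ, runMax (fun s => B s ω) (n + 1) < z}
        ≤ P ((fun ω => runMax (fun s => B s ω) (n + 1)) ⁻¹' Iio z) :=
          measure_mono fun ω hω => hω n
      _ = P.map (fun ω => |B (n + 1) ω|) (Iio z) := by
          rw [← Measure.map_apply hM measurableSet_Iio, runMax_law h hn]
      _ ≤ P.map (B (n + 1)) (Icc (-z) z) := by
          rw [Measure.map_apply (h.measurable _).abs measurableSet_Iio,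
            Measure.map_apply (h.measurable _) measurableSet_Icc]
          refine measure_mono fun ω hω => ?_
          exact abs_le.1 (le_of_lt hω)
      _ = _ := by rw [h.law hn.le]
  have : ∀ᵐ ω ∂P, ¬ ∀ n : ℕ, runMax (fun s => B s ω) (n + 1) < z := by
    rw [ae_iff]; simpa using key
  filter_upwards [this, h.cont] with ω hω hc
  push Not at hω
  obtain ⟨n, hn⟩ := hω
  obtain ⟨s, hs, hbs⟩ := (runMax_isGreatest hc (by positivity : (0:ℝ) ≤ n + 1)).1
  exact ⟨s, hs.1, hn.trans_eq hbs.symm⟩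

end

/-- Evaluate a path, known on a countable grid, by a right limit. -/
def evalGrid (p : ℝ × (ℕ × ℕ → ℝ)) : ℝ :=
  limsup (fun n : ℕ => p.2 (n, ⌈p.1 * (n + 1)⌉₊)) atTop

lemma measurable_evalGrid : Measurable evalGrid := by
  unfold evalGrid
  refine Measurable.limsup fun n => ?_
  have h1 : Measurable fun q : ℕ × (ℕ × ℕ → ℝ) => q.2 (n, q.1) :=
    measurable_from_prod_countable_right fun k => measurable_pi_apply (n, k)
  have h2 : Measurable fun p : ℝ × (ℕ × ℕ → ℝ) => (⌈p.1 * (n + 1)⌉₊, p.2) :=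
    (Nat.measurable_ceil.comp (measurable_fst.mul_const _)).prodMk measurable_snd
  exact h1.comp h2

lemma evalGrid_eq {r : ℝ → ℝ} (hr : ContinuousOn r (Ici 0)) {s : ℝ} (hs : 0 ≤ s) :
    evalGrid (s, fun p => r (p.2 / (p.1 + 1))) = r s := by
  unfold evalGrid
  apply Tendsto.limsup_eq
  have h1 : Tendsto (fun n : ℕ => (⌈s * (n + 1)⌉₊ : ℝ) / (n + 1)) atTop (𝓝 s) := by
    have h := (tendsto_nat_ceil_mul_div_atTop hs).comp
      (tendsto_atTop_add_const_right _ 1 (tendsto_natCast_atTop_atTop (R := ℝ)))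
    exact h
  have h2 := (hr s hs).tendsto.comp (tendsto_nhdsWithin_iff.2 ⟨h1, Eventually.of_forall
    (fun n => by simp only [mem_Ici]; positivity)⟩)
  exact h2

lemma freeze {Ω : Type*} {m1 m2 : MeasurableSpace Ω} [mΩ : MeasurableSpace Ω] {P : Measure Ω} [IsProbabilityMeasure P]
    {R : ℝ → Ω → ℝ} (hR : ∀ s, 0 ≤ s → Measurable[m2] (R s))
    (hm2 : m2 ≤ mΩ) (hm1 : m1 ≤ mΩ) (hcont : ∀ᵐ ω ∂P, ContinuousOn (fun s => R s ω) (Ici 0))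
    {U : Ω → ℝ} (hU : Measurable[m1] U) (hind : Indep m1 m2 P) (hU0 : ∀ ω, 0 ≤ U ω) :
    AEMeasurable (fun ω => R (U ω) ω) P ∧
    ∀ (g G : ℝ → ENNReal), Measurable g → (∀ u, 0 ≤ u → ∫⁻ ω, g (R u ω) ∂P = G u) →
      ∫⁻ ω, g (R (U ω) ω) ∂P = ∫⁻ ω, G (U ω) ∂P := by
  set Y : Ω → (ℕ × ℕ → ℝ) := fun ω p => R (p.2 / (p.1 + 1)) ω with hY
  have hYm2 : Measurable[m2] Y := by
    refine @measurable_pi_lambda _ _ _ m2 _ _ fun p => hR _ (by positivity)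
  have hYm : Measurable Y := hYm2.mono hm2 le_rfl
  have hUm : Measurable U := hU.mono hm1 le_rfl
  have hUY : IndepFun U Y P := by
    rw [IndepFun_iff_Indep]
    exact indep_of_indep_of_le_left (indep_of_indep_of_le_right hind
      (measurable_iff_comap_le.1 hYm2)) (measurable_iff_comap_le.1 hU)
  have hev : ∀ᵐ ω ∂P, ∀ s, 0 ≤ s → evalGrid (s, Y ω) = R s ω := by
    filter_upwards [hcont] with ω hω s hs
    exact evalGrid_eq hω hs
  have hevU : ∀ᵐ ω ∂P, evalGrid (U ω, Y ω) = R (U ω) ω := by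
    filter_upwards [hev] with ω hω using hω _ (hU0 ω)
  refine ⟨⟨_, measurable_evalGrid.comp (hUm.prodMk hYm), ?_⟩, ?_⟩
  · filter_upwards [hevU] with ω hω using hω.symm
  · intro g G hg hgG
    have hgm : Measurable fun p => g (evalGrid p) := hg.comp measurable_evalGrid
    have hprod := (indepFun_iff_map_prod_eq_prod_map_map hUm.aemeasurable hYm.aemeasurable).1 hUY
    have := Measure.isProbabilityMeasure_map (μ := P) hYm.aemeasurable
    calc ∫⁻ ω, g (R (U ω) ω) ∂P = ∫⁻ ω, g (evalGrid (U ω, Y ω)) ∂P := by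
          apply lintegral_congr_ae
          filter_upwards [hevU] with ω hω
          rw [hω]
      _ = ∫⁻ p, g (evalGrid p) ∂(P.map fun ω => (U ω, Y ω)) := by
          rw [lintegral_map hgm (hUm.prodMk hYm)]
      _ = ∫⁻ u, ∫⁻ y, g (evalGrid (u, y)) ∂(P.map Y) ∂(P.map U) := by
          rw [hprod, lintegral_prod _ hgm.aemeasurable]
      _ = ∫⁻ ω, ∫⁻ y, g (evalGrid (U ω, y)) ∂(P.map Y) ∂P := by
          rw [lintegral_map hgm.lintegral_prod_right' hUm]
      _ = ∫⁻ ω, G (U ω) ∂P := by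
          refine lintegral_congr fun ω => ?_
          rw [← hgG _ (hU0 ω), lintegral_map (f := fun y => g (evalGrid (U ω, y)))
            (hgm.comp measurable_prodMk_left) hYm]
          apply lintegral_congr_ae
          filter_upwards [hev] with ω' hω'
          rw [hω' _ (hU0 ω)]

lemma pi_gaussian (v : NNReal) (hv : v ≠ 0) :
    Measure.pi (fun _ : Fin 3 => gaussianReal 0 v) =
      (volume : Measure (Fin 3 → ℝ)).withDensity
        (fun x => ENNReal.ofReal (∏ i, gaussianPDFReal 0 v (x i))) := by
  apply Measure.pi_eq
  intro s hs
  have hsm : MeasurableSet (Set.univ.pi s) := MeasurableSet.univ_pi hs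
  rw [withDensity_apply _ hsm, ← lintegral_indicator hsm]
  have e : ∀ x : Fin 3 → ℝ, (Set.univ.pi s).indicator
      (fun x => ENNReal.ofReal (∏ i, gaussianPDFReal 0 v (x i))) x =
      ENNReal.ofReal (∏ i, (s i).indicator (gaussianPDFReal 0 v) (x i)) := by
    intro x
    by_cases hx : x ∈ Set.univ.pi s
    · rw [indicator_of_mem hx]
      congr 1
      refine Finset.prod_congr rfl fun i _ => ?_
      rw [indicator_of_mem (hx i (mem_univ i))]
    · rw [indicator_of_notMem hx]
      have : ∃ i, x i ∉ s i := by
        by_contra hcon; push Not at hcon; exact hx fun i _ => hcon i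
      obtain ⟨i, hi⟩ := this
      rw [Finset.prod_eq_zero (Finset.mem_univ i) (indicator_of_notMem hi _)]
      simp
  simp_rw [e]
  have hIntg : ∀ i, Integrable ((s i).indicator (gaussianPDFReal 0 v)) volume := fun i =>
    (integrable_gaussianPDFReal 0 v).indicator (hs i)
  have hnn : ∀ i x, 0 ≤ (s i).indicator (gaussianPDFReal 0 v) x := fun i x =>
    indicator_nonneg (fun x _ => gaussianPDFReal_nonneg 0 v x) x
  rw [volume_pi, ← ofReal_integral_eq_lintegral_ofReal (Integrable.fintype_prod hIntg)
    (Eventually.of_forall fun x => Finset.prod_nonneg fun i _ => hnn i _)]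
  rw [integral_fintype_prod_eq_prod (fun i => (s i).indicator (gaussianPDFReal 0 v)),
    ENNReal.ofReal_prod_of_nonneg fun i _ => integral_nonneg (hnn i)]
  refine Finset.prod_congr rfl fun i _ => ?_
  rw [integral_indicator (hs i), gaussianReal_apply_eq_integral _ hv]

lemma norm_gaussian {u : ℝ} (hu : 0 < u) :
    ∫ x : Fin 3 → ℝ, ‖(WithLp.toLp 2 x : EuclideanSpace ℝ (Fin 3))‖
      ∂(Measure.pi (fun _ : Fin 3 => gaussianReal 0 (Real.toNNReal u))) =
      √(8 / Real.pi) * √u := by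
  have hv : Real.toNNReal u ≠ 0 := by simpa using hu
  rw [pi_gaussian _ hv]
  rw [integral_withDensity_eq_integral_toReal_smul]
  rotate_left
  · apply Measurable.ennreal_ofReal
    refine Finset.measurable_prod _ fun i _ => ?_
    exact (measurable_gaussianPDFReal _ _).comp (measurable_pi_apply i)
  · exact Eventually.of_forall fun x => ENNReal.ofReal_lt_top
  set F : ℝ → ℝ := fun r => (√(2 * Real.pi * u))⁻¹ ^ 3 * (Real.exp (-(1 / (2 * u)) * r ^ (2:ℝ)) * r)
    with hF
  have e : ∀ x : Fin 3 → ℝ, (ENNReal.ofReal (∏ i, gaussianPDFReal 0 (Real.toNNReal u) (x i))).toReal •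
      ‖(WithLp.toLp 2 x : EuclideanSpace ℝ (Fin 3))‖ =
      F ‖(WithLp.toLp 2 x : EuclideanSpace ℝ (Fin 3))‖ := by
    intro x
    rw [ENNReal.toReal_ofReal (Finset.prod_nonneg fun i _ => gaussianPDFReal_nonneg _ _ _)]
    simp only [hF, gaussianPDFReal, smul_eq_mul, Real.coe_toNNReal u hu.le, Real.rpow_two]
    rw [EuclideanSpace.real_norm_sq_eq]
    simp only [Fin.prod_univ_three, Fin.sum_univ_three, sub_zero]
    have : -(1 / (2 * u)) * (x 0 ^ 2 + x 1 ^ 2 + x 2 ^ 2) =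
      -x 0 ^ 2 / (2 * u) + -x 1 ^ 2 / (2 * u) + -x 2 ^ 2 / (2 * u) := by ring
    rw [this, Real.exp_add, Real.exp_add]
    ring
  simp_rw [e]
  rw [(PiLp.volume_preserving_toLp (Fin 3)).integral_comp
    (MeasurableEquiv.toLp 2 (Fin 3 → ℝ)).measurableEmbedding (fun x => F ‖x‖)]
  rw [integral_fun_norm_addHaar]
  have hvol : (volume : Measure (EuclideanSpace ℝ (Fin 3))).real (Metric.ball 0 1) =
      4 / 3 * Real.pi := by
    rw [Measure.real, EuclideanSpace.volume_ball_fin_three]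
    simp
    rw [ENNReal.toReal_ofReal (by positivity)]
    ring
  rw [hvol]
  have e2 : ∀ y ∈ Ioi (0:ℝ), y ^ (Module.finrank ℝ (EuclideanSpace ℝ (Fin 3)) - 1) • F y =
      (√(2 * Real.pi * u))⁻¹ ^ 3 * (y ^ (3:ℝ) * Real.exp (-(1 / (2 * u)) * y ^ (2:ℝ))) := by
    intro y hy
    simp only [hF, finrank_euclideanSpace, Fintype.card_fin, smul_eq_mul]
    have : y ^ (3:ℝ) = y ^ 3 := by exact_mod_cast Real.rpow_natCast y 3
    rw [this]; ring
  rw [setIntegral_congr_fun measurableSet_Ioi e2, integral_const_mul,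
    integral_rpow_mul_exp_neg_mul_rpow (by norm_num) (by norm_num) (by positivity)]
  have hG : Real.Gamma ((3 + 1) / 2) = 1 := by norm_num
  have hP : (1 / (2 * u)) ^ (-((3:ℝ) + 1) / 2) = (2 * u) ^ 2 := by
    have : (-((3:ℝ) + 1) / 2) = -(2:ℝ) := by norm_num
    rw [this, Real.rpow_neg (by positivity), Real.rpow_two]
    field_simp
  rw [hG, hP]
  simp only [finrank_euclideanSpace, Fintype.card_fin, smul_eq_mul, nsmul_eq_mul]
  have h8 : √(8 / Real.pi) = 2 * √2 / √Real.pi := by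
    rw [Real.sqrt_div (by norm_num)]
    congr 1
    rw [show (8:ℝ) = 2 ^ 2 * 2 by norm_num, Real.sqrt_mul (by norm_num), Real.sqrt_sq (by norm_num)]
  rw [h8, Real.sqrt_mul (by positivity), Real.sqrt_mul (by norm_num)]
  have h2 : √2 ^ 2 = 2 := Real.sq_sqrt (by norm_num)
  have hp : √Real.pi ^ 2 = Real.pi := Real.sq_sqrt Real.pi_pos.le
  have huu : √u ^ 2 = u := Real.sq_sqrt hu.le
  have hp0 : 0 < √Real.pi := Real.sqrt_pos.2 Real.pi_pos
  have hu0 : 0 < √u := Real.sqrt_pos.2 hu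
  have h20 : 0 < √2 := Real.sqrt_pos.2 (by norm_num)
  generalize √Real.pi = p at *
  generalize √u = w at *
  generalize √2 = r at *
  rw [← huu, ← hp]
  field_simp
  push_cast
  have : r ^ 4 = 4 := by rw [show r ^ 4 = (r ^ 2) ^ 2 by ring, h2]; norm_num
  rw [this]

section
variable {Ω : Type*} [MeasurableSpace Ω] {P : Measure Ω} [IsProbabilityMeasure P]
  {W : ℝ → Ω → EuclideanSpace ℝ (Fin 3)}

lemma W_measurable (hW : IsBrownianMotionND P W) (u : ℝ) : Measurable (W u) := by
  have : Measurable fun ω => WithLp.ofLp (W u ω) :=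
    measurable_pi_lambda _ fun i => (hW.1 i).measurable u
  exact (MeasurableEquiv.toLp 2 (Fin 3 → ℝ)).measurable.comp this

lemma W_norm_mean (hW : IsBrownianMotionND P W) {u : ℝ} (hu : 0 ≤ u) :
    Integrable (fun ω => ‖W u ω‖) P ∧ ∫ ω, ‖W u ω‖ ∂P = √(8 / Real.pi) * √u := by
  have hmeas : ∀ i, Measurable fun ω => W u ω i := fun i => (hW.1 i).measurable u
  have hIntg : Integrable (fun ω => ‖W u ω‖) P := by
    have hi : ∀ i, Integrable (fun ω => |W u ω i|) P := by
      intro i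
      have := gaussian_integrable_pow (Real.toNNReal u) 1
      simp only [pow_one] at this
      rw [← (hW.1 i).law hu] at this
      exact this.comp_measurable (hmeas i)
    refine Integrable.mono' (integrable_finsetSum Finset.univ fun i _ => hi i)
      (W_measurable hW u).norm.aestronglyMeasurable (Eventually.of_forall fun ω => ?_)
    rw [norm_norm, EuclideanSpace.norm_eq]
    apply Real.sqrt_le_iff.2
    refine ⟨Finset.sum_nonneg fun i _ => abs_nonneg _, ?_⟩
    simp only [Fin.sum_univ_three, Real.norm_eq_abs]
    nlinarith [abs_nonneg (W u ω 0), abs_nonneg (W u ω 1), abs_nonneg (W u ω 2),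
      mul_nonneg (abs_nonneg (W u ω 0)) (abs_nonneg (W u ω 1)),
      mul_nonneg (abs_nonneg (W u ω 0)) (abs_nonneg (W u ω 2)),
      mul_nonneg (abs_nonneg (W u ω 1)) (abs_nonneg (W u ω 2))]
  refine ⟨hIntg, ?_⟩
  rcases hu.eq_or_lt with h | h
  · subst h
    have h0 : ∀ᵐ ω ∂P, ∀ i, W 0 ω i = 0 := by
      rw [ae_all_iff]; exact fun i => (hW.1 i).init
    rw [Real.sqrt_zero, mul_zero]
    apply integral_eq_zero_of_ae
    filter_upwards [h0] with ω hω
    have : W 0 ω = 0 := by ext i; simp [hω i]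
    simp [this]
  · have hind : iIndepFun (fun i : Fin 3 => fun ω => W u ω i) P := by
      rw [iIndepFun_iff_iIndep]
      have h2 := hW.2
      rw [iIndep_iff] at h2 ⊢
      intro s f hf
      apply h2 s
      intro i hi
      have : MeasurableSpace.comap (fun ω => W u ω i) inferInstance ≤
        procSigma (fun t ω => W t ω i) :=
        measurable_iff_comap_le.1 (measurable_procSigma (fun t ω => W t ω i) hu)
      exact this _ (hf i hi)
    have hmap := (iIndepFun_iff_map_fun_eq_pi_map fun i => (hmeas i).aemeasurable).1 hind
    have hl : (fun i : Fin 3 => P.map fun ω => W u ω i) = fun _ => gaussianReal 0 (Real.toNNReal u) := by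
      funext i; exact (hW.1 i).law hu
    rw [hl] at hmap
    rw [← norm_gaussian h, ← hmap, integral_map]
    · exact (measurable_pi_lambda _ hmeas).aemeasurable
    · exact ((MeasurableEquiv.toLp 2 (Fin 3 → ℝ)).measurable.norm).aestronglyMeasurable

lemma W_norm_sq (hW : IsBrownianMotionND P W) {u : ℝ} (hu : 0 ≤ u) :
    Integrable (fun ω => ‖W u ω‖ ^ 2) P ∧ ∫ ω, ‖W u ω‖ ^ 2 ∂P = 3 * u := by
  have hmeas : ∀ i, Measurable fun ω => W u ω i := fun i => (hW.1 i).measurable u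
  have hi : ∀ i, Integrable (fun ω => (W u ω i) ^ 2) P := by
    intro i
    have := gaussian_integrable_pow (Real.toNNReal u) 2
    simp only [sq_abs] at this
    rw [← (hW.1 i).law hu] at this
    exact this.comp_measurable (hmeas i)
  have e : ∀ ω, ‖W u ω‖ ^ 2 = ∑ i, (W u ω i) ^ 2 := fun ω => EuclideanSpace.real_norm_sq_eq _
  simp_rw [e]
  refine ⟨integrable_finsetSum _ fun i _ => hi i, ?_⟩
  rw [integral_finsetSum _ fun i _ => hi i]
  have : ∀ i, ∫ ω, (W u ω i) ^ 2 ∂P = u := by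
    intro i
    have h1 := gaussian_sq hu
    rw [← (hW.1 i).law hu, integral_map (hmeas i).aemeasurable (by fun_prop)] at h1
    exact h1
  simp [this]

end

lemma taylor_two {φ : ℝ → ℝ} (hφ : ContDiff ℝ 2 φ) (z x : ℝ) :
    ∃ ξ, |ξ - z| ≤ |x| ∧
      φ (z + x) = φ z + deriv φ z * x + deriv (deriv φ) ξ / 2 * x ^ 2 := by
  by_cases hx : x = 0
  · subst hx; exact ⟨z, by simp, by simp⟩
  have hne : z ≠ z + x := by simpa using hx
  obtain ⟨ξ, hξ, e⟩ := taylor_mean_remainder_lagrange_iteratedDeriv (n := 1) hne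
    (f := φ) (by norm_num; exact hφ.contDiffOn)
  refine ⟨ξ, ?_, ?_⟩
  · have h := uIoo_subset_uIcc_self hξ
    have := abs_sub_left_of_mem_uIcc h
    simpa using this
  · have hd : derivWithin φ (uIcc z (z + x)) z = deriv φ z := by
      apply DifferentiableAt.derivWithin (hφ.differentiable (by norm_num) z)
      exact uniqueDiffOn_uIcc hne z left_mem_uIcc
    rw [taylorWithinEval_succ, taylor_within_zero_eval, iteratedDerivWithin_one, hd,
      iteratedDeriv_succ, iteratedDeriv_one] at e
    simp at e
    linarith

lemma taylor_bounds {φ : ℝ → ℝ} (hφ : ContDiff ℝ 2 φ) (hc : HasCompactSupport φ) (z : ℝ) :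
    (∃ K, 0 ≤ K ∧ ∀ x, |φ (z + x) - φ z - deriv φ z * x| ≤ K * x ^ 2) ∧
    (∀ ε > 0, ∃ K, 0 ≤ K ∧ ∀ x,
      |φ (z + x) - φ z - deriv φ z * x - deriv (deriv φ) z / 2 * x ^ 2| ≤
        ε * x ^ 2 + K * |x| ^ 3) := by
  have hcont : Continuous (deriv (deriv φ)) := by
    have h1 : ContDiff ℝ 1 (deriv φ) := by
      have : ContDiff ℝ (1 + 1) φ := by norm_num; exact hφ
      exact (contDiff_succ_iff_deriv.1 this).2.2
    exact h1.continuous_deriv le_rfl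
  have hcs : HasCompactSupport (deriv (deriv φ)) := hc.deriv.deriv
  obtain ⟨K, hK⟩ := hcs.exists_bound_of_continuous hcont
  simp only [Real.norm_eq_abs] at hK
  have hK0 : 0 ≤ K := (abs_nonneg _).trans (hK 0)
  constructor
  · refine ⟨K, hK0, fun x => ?_⟩
    obtain ⟨ξ, -, e⟩ := taylor_two hφ z x
    rw [e, show φ z + deriv φ z * x + deriv (deriv φ) ξ / 2 * x ^ 2 - φ z - deriv φ z * x
      = deriv (deriv φ) ξ / 2 * x ^ 2 by ring, abs_mul, abs_of_nonneg (sq_nonneg x)]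
    apply mul_le_mul_of_nonneg_right _ (sq_nonneg x)
    rw [abs_div, abs_two]
    linarith [hK ξ]
  · intro ε hε
    obtain ⟨δ, hδ, hd⟩ := Metric.continuous_iff.1 hcont z ε hε
    refine ⟨K / δ, by positivity, fun x => ?_⟩
    obtain ⟨ξ, hξ, e⟩ := taylor_two hφ z x
    rw [e, show φ z + deriv φ z * x + deriv (deriv φ) ξ / 2 * x ^ 2 - φ z - deriv φ z * x
       - deriv (deriv φ) z / 2 * x ^ 2
      = (deriv (deriv φ) ξ - deriv (deriv φ) z) / 2 * x ^ 2 by ring, abs_mul,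
      abs_of_nonneg (sq_nonneg x), abs_div, abs_two]
    rw [show |x| ^ 3 = |x| * x ^ 2 by rw [← sq_abs x]; ring, ← mul_assoc, ← add_mul]
    apply mul_le_mul_of_nonneg_right _ (sq_nonneg x)
    by_cases hx : |x| < δ
    · have := hd ξ (by rw [Real.dist_eq]; linarith)
      rw [Real.dist_eq] at this
      have : 0 ≤ K / δ * |x| := by positivity
      linarith [abs_nonneg (deriv (deriv φ) ξ - deriv (deriv φ) z)]
    · push Not at hx
      have h1 : K ≤ K / δ * |x| := by
        rw [div_mul_eq_mul_div, le_div_iff₀ hδ]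
        exact mul_le_mul_of_nonneg_left hx hK0
      have h2 := abs_sub (deriv (deriv φ) ξ) (deriv (deriv φ) z)
      linarith [hK ξ, hK z]

lemma density_facts {z : ℝ} (hz : 0 < z)
    {γ : ℝ → ℝ} (hγ0 : ∀ x, 0 ≤ γ x) (hγsupp : ∀ x, x ∉ Set.Icc 0 z → γ x = 0)
    (hγbd : ∃ C, ∀ x, γ x ≤ C) (hγcont : ContinuousWithinAt γ (Set.Icc 0 z) z)
    {ν : Measure ℝ} [IsProbabilityMeasure ν]
    (hν : ν = volume.withDensity fun x => ENNReal.ofReal (γ x)) :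
    (∀ᵐ x ∂ν, x ∈ Icc 0 z) ∧
    (∃ C, 0 ≤ C ∧ ∀ m, 0 ≤ m → ν.real (Ici (z - m)) ≤ C * m) ∧
    (∀ ε > 0, ∃ K, 0 ≤ K ∧ ∀ m, 0 ≤ m → |ν.real (Ici (z - m)) - γ z * m| ≤ ε * m + K * m ^ 2) := by
  have happ : ∀ s, MeasurableSet s → ν s = ∫⁻ x in s, ENNReal.ofReal (γ x) := by
    intro s hs; rw [hν, withDensity_apply _ hs]
  have hcompl : ν (Icc 0 z)ᶜ = 0 := by
    rw [happ _ measurableSet_Icc.compl]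
    rw [setLIntegral_congr_fun (g := fun _ => 0) measurableSet_Icc.compl]
    · simp
    · intro x hx; simp [hγsupp x hx]
  have hIcc : ∀ m, ν (Ici (z - m)) = ∫⁻ x in Icc (z - m) z, ENNReal.ofReal (γ x) := by
    intro m
    rw [← happ _ measurableSet_Icc]
    apply measure_congr
    have : ∀ᵐ x ∂ν, x ∈ Icc 0 z := hcompl
    filter_upwards [this] with x hx
    apply propext
    change x ∈ Ici (z - m) ↔ x ∈ Icc (z - m) z
    simp [hx.2]
  have hub : ∀ m c, 0 ≤ m → 0 ≤ c → (∀ x ∈ Icc (z - m) z, γ x ≤ c) → ν.real (Ici (z - m)) ≤ c * m := by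
    intro m c hm hc h
    rw [Measure.real]
    apply ENNReal.toReal_le_of_le_ofReal (by positivity)
    rw [hIcc]
    calc _ ≤ ∫⁻ x in Icc (z - m) z, ENNReal.ofReal c :=
          setLIntegral_mono' measurableSet_Icc fun x hx => ENNReal.ofReal_le_ofReal (h x hx)
      _ = _ := by
        rw [setLIntegral_const, Real.volume_Icc, ← ENNReal.ofReal_mul hc]
        congr 2; ring
  have hlb : ∀ m c, 0 ≤ m → (∀ x ∈ Icc (z - m) z, c ≤ γ x) → c * m ≤ ν.real (Ici (z - m)) := by
    intro m c hm h
    by_cases hc : 0 ≤ c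
    · rw [Measure.real]
      apply (ENNReal.ofReal_le_iff_le_toReal (measure_ne_top _ _)).1
      rw [hIcc]
      calc _ = ∫⁻ x in Icc (z - m) z, ENNReal.ofReal c := by
            rw [setLIntegral_const, Real.volume_Icc, ← ENNReal.ofReal_mul hc]
            congr 2; ring
        _ ≤ _ := setLIntegral_mono' measurableSet_Icc fun x hx => ENNReal.ofReal_le_ofReal (h x hx)
    · have : c * m ≤ 0 := mul_nonpos_of_nonpos_of_nonneg (by linarith) hm
      exact this.trans measureReal_nonneg
  obtain ⟨C, hC⟩ := hγbd
  have hC0 : 0 ≤ C := (hγ0 0).trans (hC 0)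
  refine ⟨hcompl, ⟨C, hC0, fun m hm => hub m C hm hC0 fun x _ => hC x⟩, ?_⟩
  intro ε hε
  obtain ⟨δ0, hδ0, hd⟩ := Metric.continuousWithinAt_iff.1 hγcont ε hε
  set δ := min δ0 z with hδ
  have hδp : 0 < δ := lt_min hδ0 hz
  refine ⟨C / δ, by positivity, fun m hm => ?_⟩
  by_cases hmd : m < δ
  · have hx : ∀ x ∈ Icc (z - m) z, |γ x - γ z| < ε := by
      intro x hx
      have h1 := min_le_left δ0 z
      have h2 := min_le_right δ0 z
      have := hd (x := x) ⟨by linarith [hx.1], hx.2⟩ (by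
        rw [Real.dist_eq, abs_lt]; constructor <;> linarith [hx.1, hx.2])
      rwa [Real.dist_eq] at this
    have h1 := hub m (γ z + ε) hm (by linarith [hγ0 z]) fun x h => by
      linarith [(abs_lt.1 (hx x h)).2]
    have h2 := hlb m (γ z - ε) hm fun x h => by
      linarith [(abs_lt.1 (hx x h)).1]
    have : 0 ≤ C / δ * m ^ 2 := by positivity
    rw [abs_le]; constructor <;> linarith
  · push Not at hmd
    have h1 := hub m C hm hC0 fun x _ => hC x
    have h3 : γ z * m ≤ C * m := mul_le_mul_of_nonneg_right (hC z) hm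
    have h4 : C * m ≤ C / δ * m ^ 2 := by
      rw [div_mul_eq_mul_div, le_div_iff₀ hδp, pow_two, ← mul_assoc]
      exact mul_le_mul_of_nonneg_left hmd (by positivity)
    have h5 : 0 ≤ ν.real (Ici (z - m)) := measureReal_nonneg
    have h6 : 0 ≤ γ z * m := mul_nonneg (hγ0 z) hm
    have : 0 ≤ ε * m := by positivity
    rw [abs_le]; constructor <;> linarith

lemma integral_sqrt_sub_sq {t : ℝ} (ht : 0 < t) :
    ∫ v in (0:ℝ)..√t, √(t - v ^ 2) = Real.pi / 4 * t := by
  have h1 : ∫ x in (0:ℝ)..1, √(1 - x ^ 2) = Real.pi / 4 := by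
    have h := integral_sqrt_one_sub_sq
    have hi : ∀ a b : ℝ, IntervalIntegrable (fun x : ℝ => √(1 - x ^ 2)) volume a b := fun a b =>
      Continuous.intervalIntegrable (by fun_prop) _ _
    rw [← intervalIntegral.integral_add_adjacent_intervals (hi (-1) 0) (hi 0 1)] at h
    have hs := intervalIntegral.integral_comp_neg (a := 0) (b := 1) (fun x : ℝ => √(1 - x ^ 2))
    simp only [neg_sq, neg_zero] at hs
    rw [← hs] at h
    linarith
  have hst : 0 < √t := Real.sqrt_pos.2 ht
  have h2 := intervalIntegral.integral_comp_mul_left (a := 0) (b := 1)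
    (fun v : ℝ => √(t - v ^ 2)) hst.ne'
  rw [mul_zero, mul_one] at h2
  have e : ∀ x : ℝ, √(t - (√t * x) ^ 2) = √t * √(1 - x ^ 2) := by
    intro x
    rw [mul_pow, Real.sq_sqrt ht.le, ← Real.sqrt_mul ht.le]
    congr 1; ring
  simp_rw [e] at h2
  rw [intervalIntegral.integral_const_mul, h1, smul_eq_mul] at h2
  have hq : √t * √t = t := Real.mul_self_sqrt ht.le
  field_simp at h2
  rw [Real.sq_sqrt ht.le] at h2; linarith

lemma tendsto_of_bound {F : ℝ → ℝ} {L : ℝ}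
    (h : ∀ ε > 0, ∃ K, 0 ≤ K ∧ ∀ t, 0 < t → |F t - L * t| ≤ ε * t + K * (t * √t)) :
    Tendsto (fun t => F t / t) (𝓝[>] 0) (𝓝 L) := by
  rw [Metric.tendsto_nhds]
  intro ε hε
  obtain ⟨K, hK, hb⟩ := h (ε / 2) (by linarith)
  have hlim : Tendsto (fun t : ℝ => K * √t) (𝓝[>] 0) (𝓝 0) := by
    have : Continuous fun t : ℝ => K * √t := by fun_prop
    have h0 := this.tendsto 0
    simp at h0
    exact h0.mono_left nhdsWithin_le_nhds
  filter_upwards [self_mem_nhdsWithin, hlim.eventually (gt_mem_nhds (half_pos hε))] with t ht hKt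
  have ht : 0 < t := ht
  rw [Real.dist_eq, show F t / t - L = (F t - L * t) / t by field_simp, abs_div, abs_of_pos ht,
    div_lt_iff₀ ht]
  nlinarith [hb t ht]

section
variable {Ω : Type*} [MeasurableSpace Ω] {P : Measure Ω} [IsProbabilityMeasure P]
  {B : ℝ → Ω → ℝ} {Y : Ω → ℝ}

lemma mix {E : Type*} [MeasurableSpace E] {Z : Ω → E} (hY : Measurable Y) (hZ : Measurable Z)
    (hind : IndepFun Z Y P) {m : E → ℝ} (hm : Measurable m) {h : E → ENNReal}
    (hh : Measurable h) :
    ∫⁻ ω in {ω | Y ω ≤ m (Z ω)}, h (Z ω) ∂P =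
      ∫⁻ ω, P {ω' | Y ω' ≤ m (Z ω)} * h (Z ω) ∂P := by
  have hprod := (indepFun_iff_map_prod_eq_prod_map_map hZ.aemeasurable hY.aemeasurable).1 hind
  have := Measure.isProbabilityMeasure_map (μ := P) hY.aemeasurable
  have hS : MeasurableSet {p : E × ℝ | p.2 ≤ m p.1} :=
    measurableSet_le measurable_snd (hm.comp measurable_fst)
  have hF : Measurable ({p : E × ℝ | p.2 ≤ m p.1}.indicator fun p => h p.1) :=
    (hh.comp measurable_fst).indicator hS
  have hA : MeasurableSet {ω | Y ω ≤ m (Z ω)} := measurableSet_le hY (hm.comp hZ)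
  rw [← lintegral_indicator hA]
  calc _ = ∫⁻ ω, {p : E × ℝ | p.2 ≤ m p.1}.indicator (fun p => h p.1) (Z ω, Y ω) ∂P := rfl
    _ = ∫⁻ p, {p : E × ℝ | p.2 ≤ m p.1}.indicator (fun p => h p.1) p
        ∂(P.map fun ω => (Z ω, Y ω)) := by rw [lintegral_map hF (hZ.prodMk hY)]
    _ = ∫⁻ u, ∫⁻ y, {p : E × ℝ | p.2 ≤ m p.1}.indicator (fun p => h p.1) (u, y)
        ∂(P.map Y) ∂(P.map Z) := by
          rw [hprod, lintegral_prod _ hF.aemeasurable]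
    _ = ∫⁻ ω, ∫⁻ y, {p : E × ℝ | p.2 ≤ m p.1}.indicator (fun p => h p.1) (Z ω, y)
        ∂(P.map Y) ∂P := by
          rw [lintegral_map hF.lintegral_prod_right' hZ]
    _ = _ := by
          refine lintegral_congr fun ω => ?_
          have e : ∀ y, {p : E × ℝ | p.2 ≤ m p.1}.indicator (fun p => h p.1) (Z ω, y) =
              (Iic (m (Z ω))).indicator (fun _ => h (Z ω)) y := fun y => rfl
          simp_rw [e]
          rw [lintegral_indicator measurableSet_Iic, setLIntegral_const,
            Measure.map_apply hY measurableSet_Iic, mul_comm]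
          rfl

lemma runMax_law_nonneg (h : IsBrownianMotion P B) {t : ℝ} (ht : 0 ≤ t) :
    P.map (fun ω => runMax (fun s => B s ω) t) = P.map (fun ω => |B t ω|) := by
  rcases ht.eq_or_lt with h0 | h0
  · subst h0
    apply Measure.map_congr
    filter_upwards [h.init] with ω hω
    have : Nonempty (Set.Icc (0 : ℚ) 1) := ⟨⟨0, by simp⟩⟩
    simp [runMax, hω]
  · exact runMax_law h h0

lemma B_pow_integrable (h : IsBrownianMotion P B) {t : ℝ} (ht : 0 ≤ t) (k : ℕ) :
    Integrable (fun ω => |B t ω| ^ k) P := by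
  have := gaussian_integrable_pow (Real.toNNReal t) k
  rw [← h.law ht] at this
  exact this.comp_measurable (h.measurable t)

lemma B_abs_pow (h : IsBrownianMotion P B) {t : ℝ} (ht : 0 ≤ t) (k : ℕ) :
    ∫ ω, |B t ω| ^ k ∂P = ∫ x, |x| ^ k ∂(gaussianReal 0 (Real.toNNReal t)) := by
  rw [← h.law ht, integral_map (h.measurable t).aemeasurable (by fun_prop)]

lemma runMax_meas (h : IsBrownianMotion P B) {t : ℝ} (ht : 0 ≤ t) :
    Measurable fun ω => runMax (fun s => B s ω) t :=
  measurable_runMax (fun s _ => h.measurable s) ht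

lemma M_pow (h : IsBrownianMotion P B) {t : ℝ} (ht : 0 ≤ t) (k : ℕ) :
    Integrable (fun ω => runMax (fun s => B s ω) t ^ k) P ∧
    ∫ ω, runMax (fun s => B s ω) t ^ k ∂P = ∫ ω, |B t ω| ^ k ∂P := by
  have hM := runMax_meas h ht
  have hB : Measurable fun ω => |B t ω| := (h.measurable t).abs
  constructor
  · have : Integrable (fun x : ℝ => x ^ k) (P.map fun ω => |B t ω|) := by
      rw [integrable_map_measure (by fun_prop) hB.aemeasurable]
      exact B_pow_integrable h ht k
    rw [← runMax_law_nonneg h ht] at this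
    exact this.comp_measurable hM
  · have h1 := integral_map (μ := P) hM.aemeasurable (f := fun x : ℝ => x ^ k) (by fun_prop)
    have h2 := integral_map (μ := P) hB.aemeasurable (f := fun x : ℝ => x ^ k) (by fun_prop)
    rw [← h1, ← h2, runMax_law_nonneg h ht]

lemma B_abs_one (h : IsBrownianMotion P B) {t : ℝ} (ht : 0 ≤ t) :
    ∫ ω, |B t ω| ^ 1 ∂P = √(2 / Real.pi) * √t := by
  rw [B_abs_pow h ht]; simp only [pow_one]; exact gaussian_abs ht

lemma B_abs_two (h : IsBrownianMotion P B) {t : ℝ} (ht : 0 ≤ t) :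
    ∫ ω, |B t ω| ^ 2 ∂P = t := by
  rw [B_abs_pow h ht]; simp only [sq_abs]; exact gaussian_sq ht

lemma B_abs_three (h : IsBrownianMotion P B) {t : ℝ} (ht : 0 ≤ t) :
    ∫ ω, |B t ω| ^ 3 ∂P = (∫ x, |x| ^ 3 ∂(gaussianReal 0 1)) * (t * √t) := by
  rw [B_abs_pow h ht]; exact gaussian_cube ht

lemma pair_measurable (h : IsBrownianMotion P B) {t : ℝ} (ht : 0 ≤ t) :
    Measurable fun ω => (runMax (fun s => B s ω) t, B t ω) :=
  (runMax_meas h ht).prodMk (h.measurable t)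

lemma pair_indep {t : ℝ} (ht : 0 ≤ t)
    (hind : Indep (MeasurableSpace.comap Y inferInstance) (procSigma B) P) :
    IndepFun (fun ω => (runMax (fun s => B s ω) t, B t ω)) Y P := by
  rw [IndepFun_iff_Indep]
  refine indep_of_indep_of_le_left hind.symm ?_
  apply measurable_iff_comap_le.1
  have h1 : Measurable[procSigma B] fun ω => runMax (fun s => B s ω) t :=
    measurable_runMax (fun s hs => measurable_procSigma B hs) ht
  have h2 : Measurable[procSigma B] (B t) := measurable_procSigma B ht
  exact h1.prodMk h2

/-- Basic estimate on the event that the level has been hit. -/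
lemma hit_bound (h : IsBrownianMotion P B) {t : ℝ} (ht : 0 ≤ t) (hY : Measurable Y)
    (hind : Indep (MeasurableSpace.comap Y inferInstance) (procSigma B) P)
    {C : ℝ} (hC0 : 0 ≤ C) (hC : ∀ m, 0 ≤ m → P.real {ω | Y ω ≤ m} ≤ C * m)
    {g : ℝ × ℝ → ℝ} (hg : Measurable g) (hg0 : ∀ p, 0 ≤ g p)
    (hIntg : Integrable (fun ω => runMax (fun s => B s ω) t *
      g (runMax (fun s => B s ω) t, B t ω)) P) :
    IntegrableOn (fun ω => g (runMax (fun s => B s ω) t, B t ω))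
      {ω | Y ω ≤ runMax (fun s => B s ω) t} P ∧
    ∫ ω in {ω | Y ω ≤ runMax (fun s => B s ω) t}, g (runMax (fun s => B s ω) t, B t ω) ∂P
      ≤ C * ∫ ω, runMax (fun s => B s ω) t * g (runMax (fun s => B s ω) t, B t ω) ∂P := by
  have hpm := pair_measurable h ht
  have hmix := mix hY hpm (pair_indep ht hind) (m := Prod.fst) measurable_fst
    (h := fun p => ENNReal.ofReal (g p)) hg.ennreal_ofReal
  have hle : ∫⁻ ω in {ω | Y ω ≤ runMax (fun s => B s ω) t},
      ENNReal.ofReal (g (runMax (fun s => B s ω) t, B t ω)) ∂P ≤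
      ENNReal.ofReal (C * ∫ ω, runMax (fun s => B s ω) t *
        g (runMax (fun s => B s ω) t, B t ω) ∂P) := by
    refine hmix.le.trans ?_
    rw [← integral_const_mul, ofReal_integral_eq_lintegral_ofReal (hIntg.const_mul C)]
    · apply lintegral_mono_ae
      filter_upwards [runMax_facts h ht] with ω hω
      rw [← mul_assoc, ENNReal.ofReal_mul (mul_nonneg hC0 hω.1)]
      gcongr
      rw [← ENNReal.ofReal_toReal (measure_ne_top P _)]
      exact ENNReal.ofReal_le_ofReal (hC _ hω.1)
    · filter_upwards [runMax_facts h ht] with ω hω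
      exact mul_nonneg hC0 (mul_nonneg hω.1 (hg0 _))
  have hgm : Measurable fun ω => g (runMax (fun s => B s ω) t, B t ω) := hg.comp hpm
  constructor
  · refine ⟨hgm.aestronglyMeasurable, ?_⟩
    rw [hasFiniteIntegral_iff_ofReal (Eventually.of_forall fun ω => hg0 _)]
    exact hle.trans_lt ENNReal.ofReal_lt_top
  · rw [integral_eq_lintegral_of_nonneg_ae (Eventually.of_forall fun ω => hg0 _)
      hgm.aestronglyMeasurable]
    apply ENNReal.toReal_le_of_le_ofReal _ hle
    apply mul_nonneg hC0
    apply integral_nonneg_of_ae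
    filter_upwards [runMax_facts h ht] with ω hω
    exact mul_nonneg hω.1 (hg0 _)

lemma hit_prob_le (h : IsBrownianMotion P B) {t : ℝ} (ht : 0 ≤ t) (hY : Measurable Y)
    (hind : Indep (MeasurableSpace.comap Y inferInstance) (procSigma B) P)
    {C : ℝ} (hC0 : 0 ≤ C) (hC : ∀ m, 0 ≤ m → P.real {ω | Y ω ≤ m} ≤ C * m) :
    P.real {ω | Y ω ≤ runMax (fun s => B s ω) t} ≤ C * (√(2 / Real.pi) * √t) := by
  have hp := M_pow h ht 1
  simp only [pow_one] at hp
  have := (hit_bound h ht hY hind hC0 hC (g := fun _ => 1) measurable_const (fun _ => zero_le_one)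
    (by simpa using hp.1)).2
  simp only [mul_one] at this
  rw [hp.2] at this
  have hb := B_abs_one h ht
  simp only [pow_one] at hb
  rw [hb] at this
  simpa using this

lemma hit_sq_le (h : IsBrownianMotion P B) {t : ℝ} (ht : 0 ≤ t) (hY : Measurable Y)
    (hind : Indep (MeasurableSpace.comap Y inferInstance) (procSigma B) P)
    {C : ℝ} (hC0 : 0 ≤ C) (hC : ∀ m, 0 ≤ m → P.real {ω | Y ω ≤ m} ≤ C * m) :
    IntegrableOn (fun ω => runMax (fun s => B s ω) t ^ 2 + B t ω ^ 2)
      {ω | Y ω ≤ runMax (fun s => B s ω) t} P ∧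
    ∫ ω in {ω | Y ω ≤ runMax (fun s => B s ω) t}, (runMax (fun s => B s ω) t ^ 2 + B t ω ^ 2) ∂P
      ≤ C * (3 * (∫ x, |x| ^ 3 ∂(gaussianReal 0 1)) * (t * √t)) := by
  have hM3 := M_pow h ht 3
  have hB3 := B_pow_integrable h ht 3
  have hM := runMax_meas h ht
  have hpt : ∀ᵐ ω ∂P, 0 ≤ runMax (fun s => B s ω) t *
      (runMax (fun s => B s ω) t ^ 2 + B t ω ^ 2) ∧ runMax (fun s => B s ω) t *
      (runMax (fun s => B s ω) t ^ 2 + B t ω ^ 2) ≤ 2 * runMax (fun s => B s ω) t ^ 3 +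
        |B t ω| ^ 3 := by
    filter_upwards [runMax_facts h ht] with ω hω
    refine ⟨mul_nonneg hω.1 (by positivity), ?_⟩
    have hb := abs_nonneg (B t ω)
    rw [← sq_abs (B t ω)]
    generalize |B t ω| = b at *
    generalize runMax (fun s => B s ω) t = m at *
    have hm := hω.1
    rcases le_total m b with hmb | hmb
    · nlinarith [mul_nonneg (sub_nonneg.2 hmb) (sq_nonneg b), pow_nonneg hm 3]
    · nlinarith [mul_nonneg hm (mul_nonneg (sub_nonneg.2 hmb) (add_nonneg hm hb)), pow_nonneg hb 3]
  have hdom : Integrable (fun ω => 2 * runMax (fun s => B s ω) t ^ 3 + |B t ω| ^ 3) P :=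
    (hM3.1.const_mul 2).add hB3
  have hIntg : Integrable (fun ω => runMax (fun s => B s ω) t *
      (runMax (fun s => B s ω) t ^ 2 + B t ω ^ 2)) P := by
    refine hdom.mono' ?_ ?_
    · have := h.measurable t
      exact Measurable.aestronglyMeasurable (by fun_prop)
    · filter_upwards [hpt] with ω hω
      rw [Real.norm_eq_abs, abs_of_nonneg hω.1]; exact hω.2
  obtain ⟨h1, h2⟩ := hit_bound h ht hY hind hC0 hC (g := fun p => p.1 ^ 2 + p.2 ^ 2) (by fun_prop)
    (fun p => by positivity) hIntg
  refine ⟨h1, h2.trans (mul_le_mul_of_nonneg_left ?_ hC0)⟩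
  calc _ ≤ ∫ ω, (2 * runMax (fun s => B s ω) t ^ 3 + |B t ω| ^ 3) ∂P :=
        integral_mono_ae hIntg hdom (by filter_upwards [hpt] with ω hω using hω.2)
    _ = _ := by
        rw [integral_add (hM3.1.const_mul 2) hB3, integral_const_mul, hM3.2, B_abs_three h ht]
        ring

lemma M_atom (h : IsBrownianMotion P B) {t : ℝ} (ht : 0 < t) (y : ℝ) :
    P {ω | runMax (fun s => B s ω) t = y} = 0 := by
  have hv : Real.toNNReal t ≠ 0 := by simpa using ht
  have : NullSingletonClass (gaussianReal 0 (Real.toNNReal t)) := nullSingletonClass_gaussianReal hv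
  have hat : ∀ y, P {ω | B t ω = y} = 0 := by
    intro y
    have e : P {ω | B t ω = y} = P.map (B t) {y} := by
      rw [Measure.map_apply (h.measurable t) (measurableSet_singleton y)]; rfl
    rw [e, h.law ht.le]; exact measure_singleton y
  have e : P {ω | runMax (fun s => B s ω) t = y} =
      P.map (fun ω => runMax (fun s => B s ω) t) {y} := by
    rw [Measure.map_apply (runMax_meas h ht.le) (measurableSet_singleton y)]; rfl
  rw [e, runMax_law h ht, Measure.map_apply (h.measurable t).abs (measurableSet_singleton y)]
  refine measure_mono_null (t := {ω | B t ω = y} ∪ {ω | B t ω = -y}) ?_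
    (measure_union_null (hat y) (hat (-y)))
  intro ω hω
  have hω : |B t ω| = y := hω
  rcases abs_choice (B t ω) with hc | hc
  · left; change B t ω = y; linarith
  · right; change B t ω = -y; linarith

lemma hit_mean (h : IsBrownianMotion P B) {t : ℝ} (ht : 0 < t) (hY : Measurable Y)
    (hY0 : ∀ᵐ ω ∂P, 0 ≤ Y ω)
    (hind : Indep (MeasurableSpace.comap Y inferInstance) (procSigma B) P) :
    IntegrableOn (fun ω => B t ω - Y ω) {ω | Y ω ≤ runMax (fun s => B s ω) t} P ∧
    ∫ ω in {ω | Y ω ≤ runMax (fun s => B s ω) t}, (B t ω - Y ω) ∂P = 0 := by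
  have hM := runMax_meas h ht.le
  have hBm := h.measurable t
  have hM1 := (M_pow h ht.le 1).1
  have hB1 := B_pow_integrable h ht.le 1
  simp only [pow_one] at hM1 hB1
  have hA : MeasurableSet {ω | Y ω ≤ runMax (fun s => B s ω) t} := measurableSet_le hY hM
  have hIntg : IntegrableOn (fun ω => B t ω - Y ω) {ω | Y ω ≤ runMax (fun s => B s ω) t} P := by
    refine Integrable.mono' (hB1.add hM1).integrableOn (by fun_prop) ?_
    filter_upwards [ae_restrict_mem hA, ae_restrict_of_ae hY0] with ω h1 h2
    have h1 : Y ω ≤ runMax (fun s => B s ω) t := h1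
    rw [Real.norm_eq_abs]
    have h3 := abs_sub (B t ω) (Y ω)
    rw [abs_of_nonneg h2] at h3
    simp only [Pi.add_apply]
    linarith
  refine ⟨hIntg, ?_⟩
  set V : Ω → ℝ × ℝ := fun ω => (runMax (fun s => B s ω) t, B t ω) with hV
  have hVm : Measurable V := pair_measurable h ht.le
  have hprod := (indepFun_iff_map_prod_eq_prod_map_map hY.aemeasurable hVm.aemeasurable).1
    (pair_indep ht.le hind).symm
  have i1 := Measure.isProbabilityMeasure_map (μ := P) hY.aemeasurable
  have i2 := Measure.isProbabilityMeasure_map (μ := P) hVm.aemeasurable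
  set F : ℝ × (ℝ × ℝ) → ℝ := {p : ℝ × (ℝ × ℝ) | p.1 ≤ p.2.1}.indicator (fun p => p.2.2 - p.1)
    with hF
  have hFm : Measurable F :=
    Measurable.indicator (by fun_prop) (measurableSet_le measurable_fst (by fun_prop))
  have hpm : Measurable fun ω => (Y ω, V ω) := hY.prodMk hVm
  rw [← integral_indicator hA]
  have hIntg' : Integrable F ((P.map Y).prod (P.map V)) := by
    rw [← hprod, integrable_map_measure hFm.aestronglyMeasurable hpm.aemeasurable]
    exact (integrable_indicator_iff hA).2 hIntg
  calc _ = ∫ ω, F (Y ω, V ω) ∂P := rfl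
    _ = ∫ p, F p ∂((P.map Y).prod (P.map V)) := by
        rw [← hprod, integral_map hpm.aemeasurable hFm.aestronglyMeasurable]
    _ = ∫ y, ∫ v, F (y, v) ∂(P.map V) ∂(P.map Y) := integral_prod _ hIntg'
    _ = ∫ y, (0:ℝ) ∂(P.map Y) := by
        apply integral_congr_ae
        have : ∀ᵐ y ∂(P.map Y), 0 ≤ y := by
          rw [ae_map_iff hY.aemeasurable measurableSet_Ici]; exact hY0
        filter_upwards [this] with y hy
        rw [integral_map hVm.aemeasurable (f := fun v => F (y, v))
          (hFm.comp measurable_prodMk_left).aestronglyMeasurable]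
        have hS : MeasurableSet {ω | y ≤ runMax (fun s => B s ω) t} :=
          measurableSet_le measurable_const hM
        have e : ∫ ω, F (y, V ω) ∂P =
            ∫ ω in {ω | y ≤ runMax (fun s => B s ω) t}, (B t ω - y) ∂P := by
          rw [← integral_indicator hS]; rfl
        rw [e, ← refl_mean h hy ht]
        apply setIntegral_congr_set
        have : ∀ᵐ ω ∂P, runMax (fun s => B s ω) t ≠ y := by
          rw [ae_iff]; simpa using M_atom h ht y
        filter_upwards [this] with ω hω
        apply propext
        change y ≤ runMax (fun s => B s ω) t ↔ y < runMax (fun s => B s ω) t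
        exact ⟨fun h => lt_of_le_of_ne h (Ne.symm hω), le_of_lt⟩
    _ = 0 := by simp

end

section
variable {Ω : Type*} [MeasurableSpace Ω] {P : Measure Ω} [IsProbabilityMeasure P]
  {B : ℝ → Ω → ℝ} {Y : Ω → ℝ}

lemma hit_prob_asymp (h : IsBrownianMotion P B) {t : ℝ} (ht : 0 ≤ t) (hY : Measurable Y)
    (hind : Indep (MeasurableSpace.comap Y inferInstance) (procSigma B) P)
    {g ε K : ℝ}
    (hK : ∀ m, 0 ≤ m → |P.real {ω | Y ω ≤ m} - g * m| ≤ ε * m + K * m ^ 2) :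
    |P.real {ω | Y ω ≤ runMax (fun s => B s ω) t} - g * (√(2 / Real.pi) * √t)| ≤
      ε * (√(2 / Real.pi) * √t) + K * t := by
  have hpm := pair_measurable h ht
  have hM := runMax_meas h ht
  have hmix := mix hY hpm (pair_indep ht hind) (m := Prod.fst) measurable_fst
    (h := fun p => 1) measurable_const
  simp only [mul_one, lintegral_const, Measure.restrict_apply MeasurableSet.univ, univ_inter,
    one_mul] at hmix
  have hGm : Measurable fun m : ℝ => P.real {ω | Y ω ≤ m} := by
    apply Monotone.measurable
    intro a b hab
    exact measureReal_mono fun ω hω => le_trans (show Y ω ≤ a from hω) hab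
  have e : P.real {ω | Y ω ≤ runMax (fun s => B s ω) t} =
      ∫ ω, P.real {ω' | Y ω' ≤ runMax (fun s => B s ω) t} ∂P := by
    rw [integral_eq_lintegral_of_nonneg_ae (Eventually.of_forall fun _ => measureReal_nonneg)
      (hGm.comp hM).aestronglyMeasurable, Measure.real, hmix]
    congr 1
    exact lintegral_congr fun ω => (ENNReal.ofReal_toReal (measure_ne_top _ _)).symm
  have hM1 := M_pow h ht 1
  have hM2 := M_pow h ht 2
  rw [B_abs_one h ht] at hM1
  rw [B_abs_two h ht] at hM2
  simp only [pow_one] at hM1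
  have hGi : Integrable (fun ω => P.real {ω' | Y ω' ≤ runMax (fun s => B s ω) t}) P := by
    refine Integrable.mono' (integrable_const 1) (hGm.comp hM).aestronglyMeasurable
      (Eventually.of_forall fun ω => ?_)
    rw [Real.norm_eq_abs, abs_of_nonneg measureReal_nonneg]
    exact measureReal_le_one
  rw [e, ← hM1.2, ← integral_const_mul, ← integral_sub hGi (hM1.1.const_mul g)]
  refine (abs_integral_le_integral_abs).trans ?_
  have hdom : Integrable (fun ω => ε * runMax (fun s => B s ω) t +
      K * runMax (fun s => B s ω) t ^ 2) P := (hM1.1.const_mul ε).add (hM2.1.const_mul K)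
  calc _ ≤ ∫ ω, (ε * runMax (fun s => B s ω) t + K * runMax (fun s => B s ω) t ^ 2) ∂P := by
        apply integral_mono_ae (hGi.sub (hM1.1.const_mul g)).abs hdom
        filter_upwards [runMax_facts h ht] with ω hω
        exact hK _ hω.1
    _ = _ := by
        rw [integral_add (hM1.1.const_mul ε) (hM2.1.const_mul K), integral_const_mul,
          integral_const_mul, hM2.2]

lemma sqrt_U_asymp (h : IsBrownianMotion P B) {t : ℝ} (ht : 0 < t) (hY : Measurable Y)
    (hY0 : ∀ᵐ ω ∂P, 0 ≤ Y ω) {z : ℝ} (hYz : ∀ᵐ ω ∂P, Y ω ≤ z)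
    (hind : Indep (MeasurableSpace.comap Y inferInstance) (procSigma B) P)
    {g ε K : ℝ} (hε : 0 ≤ ε) (hK0 : 0 ≤ K)
    (hK : ∀ m, 0 ≤ m → |P.real {ω | Y ω ≤ m} - g * m| ≤ ε * m + K * m ^ 2) :
    |∫ ω, √(remTime (fun s => B s ω) (Y ω) t) ∂P - g * (√(2 / Real.pi) * (Real.pi / 4 * t))| ≤
      ε * (√(2 / Real.pi) * t) + K * (t * √t) := by
  set U : Ω → ℝ := fun ω => remTime (fun s => B s ω) (Y ω) t with hU
  have hUm : Measurable U := measurable_remTime (fun s _ => h.measurable s) hY ht.le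
  have hUb : ∀ ω, 0 ≤ U ω ∧ U ω ≤ t := fun ω => remTime_bounds _ _ ht
  have hst : 0 < √t := Real.sqrt_pos.2 ht
  have hUi : Integrable (fun ω => √(U ω)) P := by
    refine Integrable.mono' (integrable_const (√t)) hUm.sqrt.aestronglyMeasurable
      (Eventually.of_forall fun ω => ?_)
    rw [Real.norm_eq_abs, abs_of_nonneg (Real.sqrt_nonneg _)]
    exact Real.sqrt_le_sqrt (hUb ω).2
  have hD : ∀ v ∈ Ioc 0 (√t), P.real {ω | v ≤ √(U ω)} =
      P.real {ω | Y ω ≤ runMax (fun s => B s ω) (t - v ^ 2)} := by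
    intro v hv
    apply measureReal_congr
    filter_upwards [h.init, h.cont, hY0, hYz, ae_hit h z] with ω h0 hc hy hyz hhit
    obtain ⟨s, hs, hzs⟩ := hhit
    have hhit : ∃ s, 0 ≤ s ∧ Y ω ≤ B s ω := ⟨s, hs, hyz.trans hzs⟩
    have hp := hit_props hc h0 hy hhit
    have hr := remTime_eq hc h0 hy hhit ht
    have hv2 : v ^ 2 ≤ t := by
      have := pow_le_pow_left₀ hv.1.le hv.2 2
      rwa [Real.sq_sqrt ht.le] at this
    apply propext
    change v ≤ √(U ω) ↔ Y ω ≤ runMax (fun s => B s ω) (t - v ^ 2)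
    rw [← hp.2.2 (t - v ^ 2) (by linarith), Real.le_sqrt' hv.1]
    simp only [hU, hr]
    have : 0 < v ^ 2 := pow_pos hv.1 2
    rw [le_max_iff]
    constructor
    · rintro (h | h) <;> linarith
    · intro h; right; linarith
  have hD0 : ∀ v, √t < v → P.real {ω | v ≤ √(U ω)} = 0 := by
    intro v hv
    have : {ω | v ≤ √(U ω)} = ∅ := by
      ext ω
      simp only [mem_ofPred_eq, mem_empty_iff_false, iff_false, not_le]
      exact (Real.sqrt_le_sqrt (hUb ω).2).trans_lt hv
    rw [this]; simp
  rw [Integrable.integral_eq_integral_meas_le hUi (Eventually.of_forall fun ω => Real.sqrt_nonneg _)]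
  have e1 : ∫ v in Ioi (0:ℝ), P.real {ω | v ≤ √(U ω)} =
      ∫ v in (0:ℝ)..√t, P.real {ω | v ≤ √(U ω)} := by
    rw [intervalIntegral.integral_of_le hst.le]
    apply setIntegral_eq_of_subset_of_forall_sdiff_eq_zero measurableSet_Ioi Ioc_subset_Ioi_self
    intro v hv
    apply hD0
    by_contra hcon
    exact hv.2 ⟨hv.1, not_lt.1 hcon⟩
  have hanti : Antitone fun v : ℝ => P.real {ω | v ≤ √(U ω)} := by
    intro a b hab
    exact measureReal_mono fun ω hω => le_trans hab (show b ≤ √(U ω) from hω)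
  rw [e1, ← integral_sqrt_sub_sq ht, ← intervalIntegral.integral_const_mul,
    ← intervalIntegral.integral_const_mul, ← intervalIntegral.integral_sub
      hanti.intervalIntegrable (Continuous.intervalIntegrable (by fun_prop) _ _)]
  have hb := intervalIntegral.norm_integral_le_of_norm_le_const (a := 0) (b := √t)
    (f := fun v => P.real {ω | v ≤ √(U ω)} - g * (√(2 / Real.pi) * √(t - v ^ 2)))
    (C := ε * (√(2 / Real.pi) * √t) + K * t) (by
      intro v hv
      rw [uIoc_of_le hst.le] at hv
      have hv2 : v ^ 2 ≤ t := by
        have := pow_le_pow_left₀ hv.1.le hv.2 2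
        rwa [Real.sq_sqrt ht.le] at this
      rw [hD v hv, Real.norm_eq_abs]
      refine (hit_prob_asymp h (by linarith) hY hind hK).trans ?_
      have : t - v ^ 2 ≤ t := by nlinarith
      gcongr)
  rw [Real.norm_eq_abs] at hb
  refine hb.trans (le_of_eq ?_)
  rw [sub_zero, abs_of_pos hst]
  have hq : √t * √t = t := Real.mul_self_sqrt ht.le
  linear_combination (ε * √(2 / Real.pi)) * hq

lemma U_zero (h : IsBrownianMotion P B) {t : ℝ} (ht : 0 < t)
    (hY0 : ∀ᵐ ω ∂P, 0 ≤ Y ω) {z : ℝ} (hYz : ∀ᵐ ω ∂P, Y ω ≤ z) :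
    ∀ᵐ ω ∂P, ¬ Y ω ≤ runMax (fun s => B s ω) t → remTime (fun s => B s ω) (Y ω) t = 0 := by
  filter_upwards [h.init, h.cont, hY0, hYz, ae_hit h z] with ω h0 hc hy hyz hhit hA
  obtain ⟨s, hs, hzs⟩ := hhit
  have hhit : ∃ s, 0 ≤ s ∧ Y ω ≤ B s ω := ⟨s, hs, hyz.trans hzs⟩
  have hp := hit_props hc h0 hy hhit
  rw [remTime_eq hc h0 hy hhit ht]
  rw [← hp.2.2 t ht.le] at hA
  apply max_eq_left
  linarith

lemma W_cont {W : ℝ → Ω → EuclideanSpace ℝ (Fin 3)} (hW : IsBrownianMotionND P W) :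
    ∀ᵐ ω ∂P, ContinuousOn (fun s => ‖W s ω‖) (Ici 0) := by
  have : ∀ᵐ ω ∂P, ∀ i, ContinuousOn (fun s => W s ω i) (Ici 0) := by
    rw [ae_all_iff]; exact fun i => (hW.1 i).cont
  filter_upwards [this] with ω hω
  simp_rw [EuclideanSpace.norm_eq]
  apply ContinuousOn.sqrt
  exact continuousOn_finsetSum _ fun i _ => ((hω i).norm).pow 2

end

lemma R_facts {Ω : Type*} {m1 : MeasurableSpace Ω} [mΩ : MeasurableSpace Ω] {P : Measure Ω}
    [IsProbabilityMeasure P] {W : ℝ → Ω → EuclideanSpace ℝ (Fin 3)} (hW : IsBrownianMotionND P W)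
    (hm1 : m1 ≤ mΩ) {U : Ω → ℝ} {t : ℝ}
    (hU : Measurable[m1] U) (hind : Indep m1 (procSigma W) P) (hUb : ∀ ω, 0 ≤ U ω ∧ U ω ≤ t) :
    Integrable (fun ω => ‖W (U ω) ω‖) P ∧ Integrable (fun ω => ‖W (U ω) ω‖ ^ 2) P ∧
    ∫ ω, ‖W (U ω) ω‖ ∂P = √(8 / Real.pi) * ∫ ω, √(U ω) ∂P ∧
    ∫ ω, ‖W (U ω) ω‖ ^ 2 ∂P = 3 * ∫ ω, U ω ∂P := by
  have hm2 : procSigma W ≤ mΩ := by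
    apply iSup_le
    intro u
    exact measurable_iff_comap_le.1 (W_measurable hW u)
  have hUm : Measurable U := hU.mono hm1 le_rfl
  obtain ⟨hae, hfr⟩ := freeze (R := fun s ω => ‖W s ω‖)
    (fun s hs => measurable_norm.comp (measurable_procSigma W hs)) hm2 hm1 (W_cont hW) hU hind
    (fun ω => (hUb ω).1)
  have hUi : Integrable U P := by
    refine Integrable.mono' (integrable_const t) hUm.aestronglyMeasurable
      (Eventually.of_forall fun ω => ?_)
    rw [Real.norm_eq_abs, abs_of_nonneg (hUb ω).1]
    exact (hUb ω).2
  have hUs : Integrable (fun ω => √(U ω)) P := by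
    refine Integrable.mono' (integrable_const (√t)) hUm.sqrt.aestronglyMeasurable
      (Eventually.of_forall fun ω => ?_)
    rw [Real.norm_eq_abs, abs_of_nonneg (Real.sqrt_nonneg _)]
    exact Real.sqrt_le_sqrt (hUb ω).2
  have l1 := hfr (fun x => ENNReal.ofReal x) (fun u => ENNReal.ofReal (√(8 / Real.pi) * √u))
    ENNReal.measurable_ofReal (fun u hu => by
      rw [← (W_norm_mean hW hu).2, ofReal_integral_eq_lintegral_ofReal (W_norm_mean hW hu).1
        (Eventually.of_forall fun ω => norm_nonneg _)])
  have l2 := hfr (fun x => ENNReal.ofReal (x ^ 2)) (fun u => ENNReal.ofReal (3 * u))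
    (by fun_prop) (fun u hu => by
      rw [← (W_norm_sq hW hu).2, ofReal_integral_eq_lintegral_ofReal (W_norm_sq hW hu).1
        (Eventually.of_forall fun ω => by positivity)])
  rw [← ofReal_integral_eq_lintegral_ofReal (hUs.const_mul _)
    (Eventually.of_forall fun ω => by positivity), integral_const_mul] at l1
  rw [← ofReal_integral_eq_lintegral_ofReal (hUi.const_mul 3)
    (Eventually.of_forall fun ω => mul_nonneg (by norm_num) (hUb ω).1), integral_const_mul] at l2
  have hae2 : AEMeasurable (fun ω => ‖W (U ω) ω‖ ^ 2) P := hae.pow_const 2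
  refine ⟨⟨hae.aestronglyMeasurable, ?_⟩, ⟨hae2.aestronglyMeasurable, ?_⟩, ?_, ?_⟩
  · rw [hasFiniteIntegral_iff_ofReal (Eventually.of_forall fun ω => norm_nonneg _), l1]
    exact ENNReal.ofReal_lt_top
  · rw [hasFiniteIntegral_iff_ofReal (Eventually.of_forall fun ω => by positivity), l2]
    exact ENNReal.ofReal_lt_top
  · rw [integral_eq_lintegral_of_nonneg_ae (Eventually.of_forall fun ω => norm_nonneg _)
      hae.aestronglyMeasurable, l1, ENNReal.toReal_ofReal]
    exact mul_nonneg (Real.sqrt_nonneg _) (integral_nonneg fun ω => Real.sqrt_nonneg _)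
  · rw [integral_eq_lintegral_of_nonneg_ae (Eventually.of_forall fun ω => by positivity)
      hae2.aestronglyMeasurable, l2, ENNReal.toReal_ofReal]
    exact mul_nonneg (by norm_num) (integral_nonneg fun ω => (hUb ω).1)

lemma integral_sub_four {Ω : Type*} [MeasurableSpace Ω] {P : Measure Ω} {f g k l : Ω → ℝ}
    (hf : Integrable f P) (hg : Integrable g P) (hk : Integrable k P) (hl : Integrable l P) :
    ∫ ω, (f ω - g ω - k ω - l ω) ∂P =
      ∫ ω, f ω ∂P - ∫ ω, g ω ∂P - ∫ ω, k ω ∂P - ∫ ω, l ω ∂P := by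
  have h1 : Integrable (fun ω => f ω - g ω) P := hf.sub hg
  have h2 : Integrable (fun ω => f ω - g ω - k ω) P := h1.sub hk
  rw [integral_sub h2 hl, integral_sub h1 hk, integral_sub hf hg]

lemma gauss_part {Ω : Type*} [MeasurableSpace Ω] {P : Measure Ω} [IsProbabilityMeasure P]
    {B : ℝ → Ω → ℝ} (h : IsBrownianMotion P B) {φ : ℝ → ℝ} (hφ : Continuous φ)
    (hc : HasCompactSupport φ) {z a b ε K : ℝ}
    (hK : ∀ x, |φ (z + x) - φ z - a * x - b / 2 * x ^ 2| ≤ ε * x ^ 2 + K * |x| ^ 3)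
    {t : ℝ} (ht : 0 ≤ t) :
    |∫ ω, φ (z + B t ω) ∂P - φ z - b / 2 * t| ≤
      ε * t + K * ((∫ x, |x| ^ 3 ∂(gaussianReal 0 1)) * (t * √t)) := by
  obtain ⟨D, hD⟩ := hc.exists_bound_of_continuous hφ
  have hBm := h.measurable t
  have i0 : Integrable (fun ω => φ (z + B t ω)) P :=
    Integrable.mono' (integrable_const D)
      (hφ.measurable.comp (measurable_const.add hBm)).aestronglyMeasurable
      (Eventually.of_forall fun ω => hD _)
  have i1 : Integrable (fun ω => B t ω) P := by
    have := B_pow_integrable h ht 1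
    simp only [pow_one] at this
    exact (integrable_norm_iff hBm.aestronglyMeasurable).1 this
  have i2 : Integrable (fun ω => B t ω ^ 2) P := by
    have := B_pow_integrable h ht 2
    simpa only [sq_abs] using this
  have i3 := B_pow_integrable h ht 3
  have m1 : ∫ ω, B t ω ∂P = 0 := by
    have := integral_map (μ := P) hBm.aemeasurable (f := fun x : ℝ => x) (by fun_prop)
    rw [← this, h.law ht]; exact integral_id_gaussianReal
  have m2 : ∫ ω, B t ω ^ 2 ∂P = t := by
    have := B_abs_two h ht
    simpa only [sq_abs] using this
  have m3 := B_abs_three h ht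
  have e : ∫ ω, φ (z + B t ω) ∂P - φ z - b / 2 * t =
      ∫ ω, (φ (z + B t ω) - φ z - a * B t ω - b / 2 * B t ω ^ 2) ∂P := by
    rw [integral_sub_four i0 (integrable_const (φ z)) (i1.const_mul a) (i2.const_mul _),
      integral_const_mul, integral_const_mul, m1, m2]
    simp
  rw [e]
  refine abs_integral_le_integral_abs.trans ?_
  calc _ ≤ ∫ ω, (ε * B t ω ^ 2 + K * |B t ω| ^ 3) ∂P := by
        apply integral_mono
          (((i0.sub (integrable_const _)).sub (i1.const_mul a)).sub (i2.const_mul _)).abs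
          ((i2.const_mul ε).add (i3.const_mul K))
        intro ω
        exact hK _
    _ = _ := by
        rw [integral_add (i2.const_mul ε) (i3.const_mul K), integral_const_mul,
          integral_const_mul, m2, m3]

lemma core_est {Ω : Type*} {m1 : MeasurableSpace Ω} [mΩ : MeasurableSpace Ω] {P : Measure Ω}
    [IsProbabilityMeasure P] {β : ℝ → Ω → ℝ} (h : IsBrownianMotion P β)
    {W : ℝ → Ω → EuclideanSpace ℝ (Fin 3)} (hW : IsBrownianMotionND P W)
    {Y : Ω → ℝ} (hY : Measurable Y) {z : ℝ}
    (hY0 : ∀ᵐ ω ∂P, 0 ≤ Y ω) (hYz : ∀ᵐ ω ∂P, Y ω ≤ z)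
    (hind : Indep (MeasurableSpace.comap Y inferInstance) (procSigma β) P)
    (hm1 : m1 ≤ mΩ) (hβ1 : ∀ s, 0 ≤ s → Measurable[m1] (β s)) (hY1 : Measurable[m1] Y)
    (hind2 : Indep m1 (procSigma W) P)
    {C : ℝ} (hC0 : 0 ≤ C) (hC : ∀ m, 0 ≤ m → P.real {ω | Y ω ≤ m} ≤ C * m)
    {φ : ℝ → ℝ} (hφ : Continuous φ) (hc : HasCompactSupport φ) {a K : ℝ} (hK0 : 0 ≤ K)
    (hK : ∀ x, |φ (z + x) - φ z - a * x| ≤ K * x ^ 2)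
    {t : ℝ} (ht : 0 < t) {X : Ω → ℝ}
    (hX : ∀ᵐ ω ∂P, X ω = if Y ω ≤ runMax (fun s => β s ω) t then
      z - Y ω + ‖W (remTime (fun s => β s ω) (Y ω) t) ω‖ else z - β t ω) :
    |∫ ω, φ (X ω) ∂P - ∫ ω, φ (z - β t ω) ∂P -
      a * (√(8 / Real.pi) * ∫ ω, √(remTime (fun s => β s ω) (Y ω) t) ∂P)| ≤
    2 * K * (3 * C * √(2 / Real.pi) + 3 * C * (∫ x, |x| ^ 3 ∂(gaussianReal 0 1))) * (t * √t) := by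
  obtain ⟨D, hD⟩ := hc.exists_bound_of_continuous hφ
  have hBm := h.measurable t
  have hM := runMax_meas h ht.le
  set U : Ω → ℝ := fun ω => remTime (fun s => β s ω) (Y ω) t with hU
  set A := {ω | Y ω ≤ runMax (fun s => β s ω) t} with hAdef
  have hA : MeasurableSet A := measurableSet_le hY hM
  have hU1 : Measurable[m1] U := measurable_remTime hβ1 hY1 ht.le
  have hUm : Measurable U := hU1.mono hm1 le_rfl
  have hUb : ∀ ω, 0 ≤ U ω ∧ U ω ≤ t := fun ω => remTime_bounds _ _ ht
  obtain ⟨iR, iR2, eR, eR2⟩ := R_facts hW hm1 hU1 hind2 hUb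
  obtain ⟨iBY, eBY⟩ := hit_mean h ht hY hY0 hind
  obtain ⟨iS, bS⟩ := hit_sq_le h ht.le hY hind hC0 hC
  have hPA := hit_prob_le h ht.le hY hind hC0 hC
  have hU0 := U_zero h ht hY0 hYz
  have hW0 : ∀ᵐ ω ∂P, W 0 ω = 0 := by
    have h0 : ∀ᵐ ω ∂P, ∀ i, W 0 ω i = 0 := by
      rw [ae_all_iff]; exact fun i => (hW.1 i).init
    filter_upwards [h0] with ω hω
    ext i; simp [hω i]
  have iU : Integrable U P := by
    refine Integrable.mono' (integrable_const t) hUm.aestronglyMeasurable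
      (Eventually.of_forall fun ω => ?_)
    rw [Real.norm_eq_abs, abs_of_nonneg (hUb ω).1]
    exact (hUb ω).2
  have bU : ∫ ω, U ω ∂P ≤ t * (C * (√(2 / Real.pi) * √t)) := by
    calc ∫ ω, U ω ∂P ≤ ∫ ω, A.indicator (fun _ => t) ω ∂P := by
          apply integral_mono_ae iU ((integrable_const t).indicator hA)
          filter_upwards [hU0] with ω hω
          by_cases hωA : ω ∈ A
          · rw [indicator_of_mem hωA]; exact (hUb ω).2
          · rw [indicator_of_notMem hωA]; exact (hω hωA).le
      _ = P.real A * t := by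
          rw [integral_indicator hA]; simp
      _ ≤ _ := by rw [mul_comm]; exact mul_le_mul_of_nonneg_left hPA ht.le
  have iZ : Integrable (fun ω => φ (z - β t ω)) P :=
    Integrable.mono' (integrable_const D)
      (hφ.measurable.comp (measurable_const.sub hBm)).aestronglyMeasurable
      (Eventually.of_forall fun ω => hD _)
  have iX : Integrable (fun ω => φ (X ω)) P := by
    refine Integrable.mono' (integrable_const D) ?_ (Eventually.of_forall fun ω => hD _)
    apply AEMeasurable.aestronglyMeasurable
    apply hφ.measurable.comp_aemeasurable
    have : AEMeasurable (fun ω => if Y ω ≤ runMax (fun s => β s ω) t then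
      z - Y ω + ‖W (U ω) ω‖ else z - β t ω) P := by
      have hr := iR.aestronglyMeasurable.aemeasurable
      refine ⟨fun ω => if Y ω ≤ runMax (fun s => β s ω) t then
        z - Y ω + hr.mk _ ω else z - β t ω, ?_, ?_⟩
      · exact Measurable.ite hA ((measurable_const.sub hY).add hr.measurable_mk)
          (measurable_const.sub hBm)
      · filter_upwards [hr.ae_eq_mk] with ω hω
        simp only [hω]
    exact this.congr (by filter_upwards [hX] with ω hω using hω.symm)
  have iI : Integrable (A.indicator fun ω => β t ω - Y ω) P := (integrable_indicator_iff hA).2 iBY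
  have iJ : Integrable (A.indicator fun ω => runMax (fun s => β s ω) t ^ 2 + β t ω ^ 2) P :=
    (integrable_indicator_iff hA).2 iS
  have e : ∫ ω, φ (X ω) ∂P - ∫ ω, φ (z - β t ω) ∂P - a * (√(8 / Real.pi) * ∫ ω, √(U ω) ∂P) =
      ∫ ω, (φ (X ω) - φ (z - β t ω) - a * ‖W (U ω) ω‖ -
        a * A.indicator (fun ω => β t ω - Y ω) ω) ∂P := by
    rw [integral_sub_four iX iZ (iR.const_mul a) (iI.const_mul a), integral_const_mul,
      integral_const_mul, integral_indicator hA, eBY, eR]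
    ring
  rw [e]
  refine abs_integral_le_integral_abs.trans ?_
  calc _ ≤ ∫ ω, 2 * K * (‖W (U ω) ω‖ ^ 2 +
        A.indicator (fun ω => runMax (fun s => β s ω) t ^ 2 + β t ω ^ 2) ω) ∂P := by
        apply integral_mono_ae
          (((iX.sub iZ).sub (iR.const_mul a)).sub (iI.const_mul a)).abs
          ((iR2.add iJ).const_mul (2 * K))
        filter_upwards [hX, hU0, hW0, hY0] with ω hXω hUω hWω hYω
        simp only [Pi.sub_apply, Pi.add_apply]
        by_cases hωA : ω ∈ A
        · rw [indicator_of_mem hωA, indicator_of_mem hωA, hXω]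
          have hle : Y ω ≤ runMax (fun s => β s ω) t := hωA
          rw [if_pos hle]
          have k1 := hK (‖W (U ω) ω‖ - Y ω)
          have k2 := hK (- β t ω)
          change |φ (z - Y ω + ‖W (U ω) ω‖) - φ (z - β t ω) - a * ‖W (U ω) ω‖ -
            a * (β t ω - Y ω)| ≤ _
          rw [show z - Y ω + ‖W (U ω) ω‖ = z + (‖W (U ω) ω‖ - Y ω) by ring,
            show z - β t ω = z + - β t ω by ring]
          generalize φ (z + (‖W (U ω) ω‖ - Y ω)) = p at *
          generalize φ (z + -β t ω) = q at *
          generalize ‖W (U ω) ω‖ = r at *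
          generalize runMax (fun s => β s ω) t = m at *
          have hYm : Y ω ^ 2 ≤ m ^ 2 := pow_le_pow_left₀ hYω hle 2
          have hq : (r - Y ω) ^ 2 + (- β t ω) ^ 2 ≤ 2 * (r ^ 2 + (m ^ 2 + β t ω ^ 2)) := by
            nlinarith [sq_nonneg (r + Y ω), sq_nonneg (β t ω)]
          have hq2 := mul_le_mul_of_nonneg_left hq hK0
          have tri := abs_sub (p - φ z - a * (r - Y ω)) (q - φ z - a * (-β t ω))
          rw [show p - q - a * r - a * (β t ω - Y ω) =
            (p - φ z - a * (r - Y ω)) - (q - φ z - a * (-β t ω)) by ring]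
          linarith
        · rw [indicator_of_notMem hωA, indicator_of_notMem hωA, hXω]
          rw [if_neg (show ¬ Y ω ≤ runMax (fun s => β s ω) t from hωA)]
          have hz0 : U ω = 0 := hUω hωA
          rw [hz0, hWω]
          simp
    _ = 2 * K * (3 * ∫ ω, U ω ∂P + ∫ ω in A, (runMax (fun s => β s ω) t ^ 2 + β t ω ^ 2) ∂P) := by
        rw [integral_const_mul, integral_add iR2 iJ, eR2, integral_indicator hA]
    _ ≤ 2 * K * (3 * (t * (C * (√(2 / Real.pi) * √t))) +
        C * (3 * (∫ x, |x| ^ 3 ∂(gaussianReal 0 1)) * (t * √t))) := by gcongr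
    _ = _ := by ring

lemma path_identity {Ω : Type*} [MeasurableSpace Ω] {P : Measure Ω} [IsProbabilityMeasure P]
    {Bm : ℝ → Ω → ℝ} (h : IsBrownianMotion P Bm)
    {W : ℝ → Ω → EuclideanSpace ℝ (Fin 3)} (hW : IsBrownianMotionND P W) {J : Ω → ℝ} {z : ℝ}
    (hJ : ∀ᵐ ω ∂P, J ω ∈ Icc 0 z) {t : ℝ} (ht : 0 < t) :
    ∀ᵐ ω ∂P, (if t ≤ sInf {s | 0 ≤ s ∧ Bm s ω = J ω - z} then z + Bm t ω
          else J ω + ‖W (t - sInf {s | 0 ≤ s ∧ Bm s ω = J ω - z}) ω‖) =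
      if z - J ω ≤ runMax (fun s => - Bm s ω) t then
      z - (z - J ω) + ‖W (remTime (fun s => - Bm s ω) (z - J ω) t) ω‖ else z - - Bm t ω := by
  have hW0 : ∀ᵐ ω ∂P, W 0 ω = 0 := by
    have h0 : ∀ᵐ ω ∂P, ∀ i, W 0 ω i = 0 := by
      rw [ae_all_iff]; exact fun i => (hW.1 i).init
    filter_upwards [h0] with ω hω
    ext i; simp [hω i]
  filter_upwards [hW0, hJ, h.neg.init, h.neg.cont, ae_hit h.neg z] with ω hW0 hJ h0 hc hhit
  obtain ⟨s, hs, hzs⟩ := hhit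
  have hy : 0 ≤ z - J ω := by linarith [hJ.2]
  have hhit : ∃ s, 0 ≤ s ∧ z - J ω ≤ - Bm s ω := ⟨s, hs, by linarith [hJ.1]⟩
  have hp := hit_props hc h0 hy hhit
  have hr := remTime_eq hc h0 hy hhit ht
  have eS : {s | 0 ≤ s ∧ Bm s ω = J ω - z} = {s | 0 ≤ s ∧ - Bm s ω = z - J ω} := by
    ext s
    simp only [mem_ofPred_eq]
    constructor
    · rintro ⟨h1, h2⟩; exact ⟨h1, by linarith⟩
    · rintro ⟨h1, h2⟩; exact ⟨h1, by linarith⟩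
  rw [eS, hr]
  simp only [← hp.2.2 t ht.le]
  obtain ⟨-, h2, -⟩ := hp
  generalize sInf {s | 0 ≤ s ∧ - Bm s ω = z - J ω} = τ at *
  rcases lt_trichotomy τ t with hlt | heq | hgt
  · rw [if_neg (by linarith), if_pos hlt.le, max_eq_right (by linarith)]
    ring
  · subst heq
    rw [if_pos le_rfl, if_pos le_rfl]
    simp only [sub_self, max_self, hW0, norm_zero]
    linarith
  · rw [if_pos hgt.le, if_neg (by linarith)]
    ring

/-- For a general mixture of BES(3) built from a bounded mixing density `γ`
on `[0, z]` that is continuous at `z` (Brownian motion from `z` until it hits the level `J`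
with density `γ`, then an independent `BES(3)` from `J`), the infinitesimal generator at the
starting point `z` acts on `φ ∈ C²_c((0, ∞))` as `(1/2) φ''(z) + γ(z) φ'(z)`. -/
theorem generator_of_general_mixture {Ω : Type*} [MeasurableSpace Ω] (P : Measure Ω)
    [IsProbabilityMeasure P] (z : ℝ) (hz : 0 < z)
    (γ : ℝ → ℝ) (hγ0 : ∀ x, 0 ≤ γ x) (hγsupp : ∀ x, x ∉ Set.Icc 0 z → γ x = 0)
    (hγbd : ∃ C, ∀ x, γ x ≤ C)
    (hγcont : ContinuousWithinAt γ (Set.Icc 0 z) z)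
    (hγint : (∫ x in (0 : ℝ)..z, γ x) = 1)
    (J : Ω → ℝ) (hJmeas : Measurable J)
    (hJlaw : P.map J = volume.withDensity fun x => ENNReal.ofReal (γ x))
    (Bm : ℝ → Ω → ℝ) (hBm : IsBrownianMotion P Bm)
    (W3 : ℝ → Ω → EuclideanSpace ℝ (Fin 3)) (hW3 : IsBrownianMotionND P W3)
    (hindep : iIndep
      (![MeasurableSpace.comap J inferInstance, procSigma Bm, procSigma W3]) P)
    (φ : ℝ → ℝ) (hφ : ContDiff ℝ 2 φ) (hφc : HasCompactSupport φ)
    (hφs : tsupport φ ⊆ Set.Ioi 0) :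
    Tendsto
      (fun t => (∫ ω, φ (if t ≤ sInf {s | 0 ≤ s ∧ Bm s ω = J ω - z} then z + Bm t ω
          else J ω + ‖W3 (t - sInf {s | 0 ≤ s ∧ Bm s ω = J ω - z}) ω‖) ∂P - φ z) / t)
      (𝓝[>] (0 : ℝ))
      (𝓝 ((1 / 2) * deriv (deriv φ) z + γ z * deriv φ z)) := by
  have hβ := hBm.neg
  set β : ℝ → Ω → ℝ := fun t ω => - Bm t ω with hβdef
  set Y : Ω → ℝ := fun ω => z - J ω with hYdef
  have hY : Measurable Y := measurable_const.sub hJmeas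
  have iν : IsProbabilityMeasure (P.map J) :=
    Measure.isProbabilityMeasure_map (μ := P) hJmeas.aemeasurable
  obtain ⟨hsup, ⟨C, hC0, hC⟩, hasym⟩ := density_facts hz hγ0 hγsupp hγbd hγcont hJlaw
  have hΓ : ∀ m, (P.map J).real (Ici (z - m)) = P.real {ω | Y ω ≤ m} := by
    intro m
    rw [Measure.real, Measure.map_apply hJmeas measurableSet_Ici, Measure.real]
    congr 2
    ext ω
    simp only [hYdef, mem_preimage, mem_Ici, mem_ofPred_eq]
    constructor <;> intro h <;> linarith
  simp only [hΓ] at hC hasym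
  have hJ : ∀ᵐ ω ∂P, J ω ∈ Icc 0 z := ae_of_ae_map hJmeas.aemeasurable hsup
  have hY0 : ∀ᵐ ω ∂P, 0 ≤ Y ω := by
    filter_upwards [hJ] with ω hω
    simp only [hYdef]; linarith [hω.2]
  have hYz : ∀ᵐ ω ∂P, Y ω ≤ z := by
    filter_upwards [hJ] with ω hω
    simp only [hYdef]; linarith [hω.1]
  have hleJ : MeasurableSpace.comap J inferInstance ≤ ‹MeasurableSpace Ω› := measurable_iff_comap_le.1 hJmeas
  have hleB : procSigma Bm ≤ ‹MeasurableSpace Ω› :=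
    iSup_le fun u => measurable_iff_comap_le.1 (hBm.measurable u)
  have hleW : procSigma W3 ≤ ‹MeasurableSpace Ω› :=
    iSup_le fun u => measurable_iff_comap_le.1 (W_measurable hW3 u)
  have hYJ : MeasurableSpace.comap Y inferInstance ≤ MeasurableSpace.comap J inferInstance :=
    measurable_iff_comap_le.1 (measurable_const.sub (comap_measurable J))
  have hββ : procSigma β ≤ procSigma Bm := by
    apply iSup_le
    intro u
    exact measurable_iff_comap_le.1 (measurable_procSigma Bm u.2).neg
  have hind : Indep (MeasurableSpace.comap Y inferInstance) (procSigma β) P := by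
    have h01 := hindep.indep (i := 0) (j := 1) (by decide)
    exact indep_of_indep_of_le_left (indep_of_indep_of_le_right h01 hββ) hYJ
  have hm1 : MeasurableSpace.comap J inferInstance ⊔ procSigma Bm ≤ ‹MeasurableSpace Ω› := sup_le hleJ hleB
  have hind2 : Indep (MeasurableSpace.comap J inferInstance ⊔ procSigma Bm) (procSigma W3) P := by
    have hd : Disjoint ({0, 1} : Set (Fin 3)) {2} := by simp
    have hh := indep_iSup_of_disjoint (fun i => by
      fin_cases i
      · exact hleJ
      · exact hleB
      · exact hleW) hindep hd
    refine indep_of_indep_of_le_left (indep_of_indep_of_le_right hh ?_) ?_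
    · exact le_iSup₂_of_le (2 : Fin 3) rfl le_rfl
    · apply sup_le
      · exact le_iSup₂_of_le (0 : Fin 3) (by simp) le_rfl
      · exact le_iSup₂_of_le (1 : Fin 3) (by simp) le_rfl
  have hβ1 : ∀ s, 0 ≤ s → Measurable[MeasurableSpace.comap J inferInstance ⊔ procSigma Bm] (β s) := fun s hs =>
    ((measurable_procSigma β hs).mono (hββ.trans le_sup_right) le_rfl)
  have hY1 : Measurable[MeasurableSpace.comap J inferInstance ⊔ procSigma Bm] Y :=
    (comap_measurable Y).mono (hYJ.trans le_sup_left) le_rfl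
  obtain ⟨⟨K1, hK10, hK1⟩, htay⟩ := taylor_bounds hφ hφc z
  apply tendsto_of_bound
  intro ε hε
  set c := √(8 / Real.pi) * √(2 / Real.pi) with hc
  have hc0 : 0 ≤ c := by positivity
  have hcpi : c * (Real.pi / 4) = 1 := by
    rw [hc, ← Real.sqrt_mul (by positivity)]
    have : 8 / Real.pi * (2 / Real.pi) = (4 / Real.pi) ^ 2 := by ring
    rw [this, Real.sqrt_sq (by positivity)]
    field_simp
  set a := deriv φ z with ha
  set ε2 := ε / (2 * (|a| * c + 1)) with hε2
  have hac : 0 ≤ |a| * c := mul_nonneg (abs_nonneg a) hc0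
  have hε2p : 0 < ε2 := by positivity
  have hε2b : |a| * c * ε2 ≤ ε / 2 := by
    rw [hε2, mul_div_assoc', div_le_iff₀ (by positivity)]
    nlinarith
  obtain ⟨K2, hK20, hK2⟩ := htay (ε / 2) (by linarith)
  obtain ⟨K3, hK30, hK3⟩ := hasym ε2 hε2p
  set k3 := ∫ x, |x| ^ 3 ∂(gaussianReal 0 1) with hk3
  have hk30 : 0 ≤ k3 := integral_nonneg fun x => by positivity
  refine ⟨K2 * k3 + |a| * √(8 / Real.pi) * K3 + 2 * K1 * (3 * C * √(2 / Real.pi) + 3 * C * k3),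
    by positivity, fun t ht => ?_⟩
  have g1 := gauss_part hBm hφ.continuous hφc hK2 ht.le
  have g2 := sqrt_U_asymp hβ ht hY hY0 hYz hind hε2p.le hK30 hK3
  have g3 := core_est hβ hW3 hY hY0 hYz hind hm1 hβ1 hY1 hind2 hC0 hC hφ.continuous hφc hK10 hK1 ht
    (path_identity hBm hW3 hJ ht)
  have eZ : ∀ ω, z - β t ω = z + Bm t ω := fun ω => by simp [hβdef]
  simp only [eZ] at g3
  generalize (∫ ω, √(remTime (fun s => β s ω) (Y ω) t) ∂P) = S at *
  generalize (∫ ω, φ (z + Bm t ω) ∂P) = G at *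
  generalize (∫ ω, φ (if t ≤ sInf {s | 0 ≤ s ∧ Bm s ω = J ω - z} then z + Bm t ω
          else J ω + ‖W3 (t - sInf {s | 0 ≤ s ∧ Bm s ω = J ω - z}) ω‖) ∂P) = X at *
  have g2' : |a * √(8 / Real.pi) * (S - γ z * (√(2 / Real.pi) * (Real.pi / 4 * t)))| ≤
      |a| * √(8 / Real.pi) * (ε2 * (√(2 / Real.pi) * t) + K3 * (t * √t)) := by
    rw [abs_mul, abs_mul, abs_of_nonneg (Real.sqrt_nonneg (8 / Real.pi))]
    exact mul_le_mul_of_nonneg_left g2 (by positivity)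
  have e1 : X - φ z - (1 / 2 * deriv (deriv φ) z + γ z * a) * t =
      (X - G - a * (√(8 / Real.pi) * S)) + (G - φ z - deriv (deriv φ) z / 2 * t) +
      a * √(8 / Real.pi) * (S - γ z * (√(2 / Real.pi) * (Real.pi / 4 * t))) := by
    linear_combination (a * γ z * t) * hcpi
  rw [e1]
  have tri := abs_add_three (X - G - a * (√(8 / Real.pi) * S)) (G - φ z - deriv (deriv φ) z / 2 * t)
    (a * √(8 / Real.pi) * (S - γ z * (√(2 / Real.pi) * (Real.pi / 4 * t))))
  have hfin : |a| * √(8 / Real.pi) * (ε2 * (√(2 / Real.pi) * t) + K3 * (t * √t)) ≤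
      ε / 2 * t + |a| * √(8 / Real.pi) * K3 * (t * √t) := by
    have := mul_le_mul_of_nonneg_right hε2b ht.le
    have e2 : |a| * √(8 / Real.pi) * (ε2 * (√(2 / Real.pi) * t) + K3 * (t * √t)) =
      |a| * c * ε2 * t + |a| * √(8 / Real.pi) * K3 * (t * √t) := by rw [hc]; ring
    linarith
  have e3 : ε * t + (K2 * k3 + |a| * √(8 / Real.pi) * K3 +
      2 * K1 * (3 * C * √(2 / Real.pi) + 3 * C * k3)) * (t * √t) =
      (ε / 2 * t + K2 * (k3 * (t * √t))) + (ε / 2 * t + |a| * √(8 / Real.pi) * K3 * (t * √t)) +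
      2 * K1 * (3 * C * √(2 / Real.pi) + 3 * C * k3) * (t * √t) := by ring
  rw [e3]
  linarith
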